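/- Let K be an algebraically closed field, let (τ_n) be a Zariski geometry on K such that every Zariski-closed subset of K^n is τ_n-closed, and let C ⊆ K² be a τ_2-closed irreducible set of dimension 1 whose degree is m, i.e., there is a nonempty Zariski-open set U ⊆ K² such that for every (a,b) ∈ U the set C ∩ {(x,y) : y = a·x + b} has exactly m elements. Then for every nonzero polynomial f ∈ K[X,Y] of total degree d, if the set C ∩ {p ∈ K² : f(p) = 0} is finite, then it has at most d·m elements. -/

import Mathlib

open Topology

/-- A subset of `K^n` is *Zariski-closed* (an affine algebraic set) if it is the common
zero set of a set of polynomials in `n` variables. -/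
def ZariskiClosedSet (K : Type*) [Field K] {n : ℕ} (C : Set (Fin n → K)) : Prop :=
  ∃ S : Set (MvPolynomial (Fin n) K), C = {x | ∀ f ∈ S, MvPolynomial.eval x f = 0}

/-- The Zariski topology on `K^n`: the topology whose closed sets are the affine
algebraic sets. -/
def zariskiTopology (K : Type*) [Field K] (n : ℕ) : TopologicalSpace (Fin n → K) :=
  TopologicalSpace.generateFrom {U | ZariskiClosedSet K Uᶜ}

/-- The dimension of a subset `S` of a topological space: the topological Krull
dimension of `S` with the subspace topology (the maximal length of a chain of
irreducible closed subsets). -/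
noncomputable def setKrullDim {X : Type*} (t : TopologicalSpace X) (S : Set X) : WithBot ℕ∞ :=
  @topologicalKrullDim S (t.induced Subtype.val)

/-- `T` is an irreducible component of `S` (w.r.t. the topology `t`) if `T` is a maximal
irreducible subset of `S`. -/
def IsIrredComponentOf {X : Type*} (t : TopologicalSpace X) (T S : Set X) : Prop :=
  Maximal (fun T => T ⊆ S ∧ @IsIrreducible X t T) T

/-- A *Zariski geometry* on a set `X`: a Noetherian topology on each Cartesian power
`X^n` satisfying axioms (Z0)-(Z3). -/
structure ZariskiGeometry (X : Type*) where
  τ : ∀ n : ℕ, TopologicalSpace (Fin n → X)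
  noetherian : ∀ n, @TopologicalSpace.NoetherianSpace (Fin n → X) (τ n)
  /-- (Z0): every map `X^n → X^m` each of whose coordinates is a constant or a
  coordinate projection is continuous. -/
  Z0_cont : ∀ (n m : ℕ) (g : Fin m → (Fin n ⊕ X)),
    Continuous[τ n, τ m] (fun x i => Sum.elim (fun j => x j) id (g i))
  /-- (Z0): the diagonals are closed. -/
  Z0_diag : ∀ (n : ℕ) (i j : Fin n), IsClosed[τ n] {x | x i = x j}
  /-- (Z1): for a (nonempty) closed `C ⊆ X^n` and a coordinate projection
  `π : X^n → X^k`, there is a proper closed subset `F` of `cl(π C)` with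
  `cl(π C) \ F ⊆ π C`. -/
  Z1 : ∀ (n k : ℕ) (h : k ≤ n) (C : Set (Fin n → X)), IsClosed[τ n] C → C.Nonempty →
    ∃ F : Set (Fin k → X), IsClosed[τ k] F ∧
      F ⊂ closure[τ k] ((fun x => x ∘ Fin.castLE h) '' C) ∧
      closure[τ k] ((fun x => x ∘ Fin.castLE h) '' C) \ F ⊆ (fun x => x ∘ Fin.castLE h) '' C
  /-- (Z2): `X` is irreducible. -/
  Z2_irred : @IrreducibleSpace (Fin 1 → X) (τ 1)
  /-- (Z2): uniform one-dimensionality. -/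
  Z2 : ∀ (n : ℕ) (C : Set (Fin (n + 1) → X)), IsClosed[τ (n + 1)] C →
    ∃ m : ℕ, ∀ a : Fin n → X, {b : X | Fin.snoc a b ∈ C} = Set.univ ∨
      ({b : X | Fin.snoc a b ∈ C}.Finite ∧ {b : X | Fin.snoc a b ∈ C}.ncard ≤ m)
  /-- (Z3) (Dimension theorem): every irreducible component of the intersection of a
  closed irreducible `U ⊆ X^n` with a diagonal has dimension `≥ dim U - 1`. -/
  Z3 : ∀ (n : ℕ) (U : Set (Fin n → X)) (i j : Fin n), IsClosed[τ n] U →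
    @IsIrreducible _ (τ n) U →
    ∀ T : Set (Fin n → X), IsIrredComponentOf (τ n) T (U ∩ {x | x i = x j}) →
      setKrullDim (τ n) U ≤ setKrullDim (τ n) T + 1

/-!
Deform the curve `f = 0` through the pencil `(1 - s) f + s ℓ₁ ⋯ ℓ_d` into a union of `d` lines
`ℓ_k`, each meeting `C` in exactly `m` points. By (Z3) the intersection points of `C` with the
members of the pencil move in one-dimensional families, so all the points of `C ∩ {f = 0}` can be
followed simultaneously; passing to projective coordinates, they have limits at `s = 1`, and so do
the directions of the chords joining them. For lines in general position no limit point lies at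
infinity, because no `ℓ_k` is asymptotic to `C`, and no two limit points coincide, because the
limiting chord would make some `ℓ_k` tangent to `C`. Hence `C ∩ {f = 0}` injects into the union of
the `d` sets `C ∩ ℓ_k`.
-/

namespace ZariskiGeometry

open Set TopologicalSpace Function Order

/-! ### Irreducible closed sets and their dimension -/

section Irreducible

variable {X Y : Type*} [TopologicalSpace X] [TopologicalSpace Y]

instance [IrreducibleSpace X] : OrderTop (IrreducibleCloseds X) where
  top := ⟨univ, IrreducibleSpace.isIrreducible_univ X, isClosed_univ⟩
  le_top S := subset_univ (S : Set X)

@[simp]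
theorem coe_top_irreducibleCloseds [IrreducibleSpace X] :
    ((⊤ : IrreducibleCloseds X) : Set X) = univ :=
  rfl

@[simp]
theorem mem_top_irreducibleCloseds [IrreducibleSpace X] (x : X) : x ∈ (⊤ : IrreducibleCloseds X) :=
  mem_univ x

theorem mem_map {f : X → Y} (hf : Continuous f) {S : IrreducibleCloseds X} {x : X} (hx : x ∈ S) :
    f x ∈ S.map f hf :=
  subset_closure (mem_image_of_mem f hx)

theorem map_subset_iff {f : X → Y} (hf : Continuous f) {S : IrreducibleCloseds X} {F : Set Y}
    (hF : IsClosed F) : (S.map f hf : Set Y) ⊆ F ↔ ∀ x ∈ S, f x ∈ F :=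
  hF.closure_subset_iff.trans image_subset_iff

theorem map_le_iff {f : X → Y} (hf : Continuous f) {S : IrreducibleCloseds X}
    {T : IrreducibleCloseds Y} : S.map f hf ≤ T ↔ ∀ x ∈ S, f x ∈ T :=
  map_subset_iff hf T.isClosed

theorem coe_map_of_isClosedEmbedding {f : X → Y} (hf : IsClosedEmbedding f)
    (S : IrreducibleCloseds X) : (S.map f hf.continuous : Set Y) = f '' S :=
  (hf.isClosedMap _ S.isClosed).closure_eq

theorem exists_map_eq_of_isClosedEmbedding {f : X → Y} (hf : IsClosedEmbedding f)
    {T : IrreducibleCloseds Y} (hT : (T : Set Y) ⊆ range f) :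
    ∃ S : IrreducibleCloseds X, S.map f hf.continuous = T ∧ (S : Set X) = f ⁻¹' T := by
  have himage : f '' (f ⁻¹' T) = T := image_preimage_eq_of_subset hT
  have hirr : IsIrreducible (f ⁻¹' (T : Set Y)) := by
    refine ⟨Nonempty.of_image (f := f) (by rw [himage]; exact T.isIrreducible.nonempty), ?_⟩
    refine isPreirreducible_iff_isClosed_union_isClosed.2 fun A B hA hB hAB => ?_
    have hcover : (T : Set Y) ⊆ f '' A ∪ f '' B := by
      rw [← himage, ← image_union]
      exact image_mono hAB
    refine (isPreirreducible_iff_isClosed_union_isClosed.1 T.isIrreducible.isPreirreducible _ _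
      (hf.isClosedMap A hA) (hf.isClosedMap B hB) hcover).imp ?_ ?_ <;>
    exact fun h => by simpa only [preimage_image_eq _ hf.injective] using preimage_mono (f := f) h
  refine ⟨⟨f ⁻¹' T, hirr, T.isClosed.preimage hf.continuous⟩, ?_, rfl⟩
  exact IrreducibleCloseds.ext ((coe_map_of_isClosedEmbedding hf _).trans himage)

theorem height_map_of_isClosedEmbedding {f : X → Y} (hf : IsClosedEmbedding f)
    (S : IrreducibleCloseds X) : height (S.map f hf.continuous) = height S := by
  have hmono := IrreducibleCloseds.map_strictMono_of_isInducing hf.isInducing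
  refine (height_eq_of_strictMono _ hmono (fun A B hBA => ?_) S).symm
  have hB : (B : Set Y) ⊆ range f := calc
    (B : Set Y) ⊆ A.map f hf.continuous := hBA.le
    _ ⊆ range f := by
      rw [coe_map_of_isClosedEmbedding hf]
      exact image_subset_range f A
  obtain ⟨T, rfl, -⟩ := exists_map_eq_of_isClosedEmbedding hf hB
  have hTA : T ≤ A := by
    have himage : f '' T ⊆ f '' A := by
      simpa only [← coe_map_of_isClosedEmbedding hf, SetLike.coe_subset_coe] using hBA.le
    exact (image_subset_image_iff hf.injective).1 himage
  exact ⟨T, lt_of_le_of_ne hTA (fun h => hBA.ne (h ▸ rfl)), rfl⟩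

theorem setKrullDim_eq_height {X : Type*} [t : TopologicalSpace X] (S : IrreducibleCloseds X) :
    setKrullDim t (S : Set X) = height S := by
  have := Subtype.irreducibleSpace S.isIrreducible
  have hemb := S.isClosed.isClosedEmbedding_subtypeVal
  have htop : (⊤ : IrreducibleCloseds (S : Set X)).map Subtype.val hemb.continuous = S :=
    IrreducibleCloseds.ext ((coe_map_of_isClosedEmbedding hemb _).trans
      (by rw [coe_top_irreducibleCloseds, image_univ, Subtype.range_coe]))
  calc setKrullDim t (S : Set X)
      = height (⊤ : IrreducibleCloseds (S : Set X)) := height_top_eq_krullDim.symm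
    _ = height S := by rw [← height_map_of_isClosedEmbedding hemb, htop]

theorem exists_superset_of_subset_sUnion {F : Set (Set X)} (hF : F.Finite)
    (hFc : ∀ t ∈ F, IsClosed t) {A : Set X} (hA : IsIrreducible A) (hAF : A ⊆ ⋃₀ F) :
    ∃ t ∈ F, A ⊆ t := by
  lift F to Finset (Set X) using hF
  exact isIrreducible_iff_sUnion_isClosed.1 hA F hFc hAF

theorem exists_isIrredComponentOf [NoetherianSpace X] {S A : Set X} (hS : IsClosed S)
    (hA : IsIrreducible A) (hAS : A ⊆ S) :
    ∃ T : IrreducibleCloseds X, A ⊆ T ∧ IsIrredComponentOf ‹TopologicalSpace X› (T : Set X) S := by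
  obtain ⟨F, hF, hFc, hFi, rfl⟩ := NoetherianSpace.exists_finite_set_isClosed_irreducible hS
  obtain ⟨t, ht, hAt⟩ := exists_superset_of_subset_sUnion hF hFc hA hAS
  obtain ⟨T, htT, hT⟩ := hF.exists_le_maximal ht
  refine ⟨⟨T, hFi T hT.prop, hFc T hT.prop⟩, hAt.trans htT,
    ⟨subset_sUnion_of_mem hT.prop, hFi T hT.prop⟩, fun B ⟨hBF, hB⟩ hTB => ?_⟩
  obtain ⟨t', ht', hBt'⟩ := exists_superset_of_subset_sUnion hF hFc hB hBF
  exact hBt'.trans (hT.2 ht' (hTB.trans hBt'))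

theorem exists_irreducibleCloseds_dominating [NoetherianSpace X] {f : X → Y} (hf : Continuous f)
    {S : Set X} (hS : IsClosed S) {B : IrreducibleCloseds Y} (hB : (B : Set Y) ⊆ closure (f '' S)) :
    ∃ T : IrreducibleCloseds X, (T : Set X) ⊆ S ∧ B ≤ T.map f hf := by
  obtain ⟨F, hF, hFc, hFi, rfl⟩ := NoetherianSpace.exists_finite_set_isClosed_irreducible hS
  have hcover : (B : Set Y) ⊆ ⋃₀ ((fun t => closure (f '' t)) '' F) := by
    rwa [sUnion_image, ← hF.closure_biUnion, ← image_iUnion₂, ← sUnion_eq_biUnion]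
  obtain ⟨_, ⟨T, hT, rfl⟩, hBT⟩ := exists_superset_of_subset_sUnion (hF.image _)
    (forall_mem_image.2 fun _ _ => isClosed_closure) B.isIrreducible hcover
  exact ⟨⟨T, hFi T hT, hFc T hT⟩, subset_sUnion_of_mem hT, hBT⟩

theorem one_le_height_iff [T1Space X] {S : IrreducibleCloseds X} :
    1 ≤ height S ↔ (S : Set X).Nontrivial := by
  rw [Order.one_le_iff_pos, height_pos, isMin_iff_forall_not_lt]
  refine ⟨fun h => ?_, fun ⟨x, hx, y, hy, hxy⟩ hmin => ?_⟩
  · obtain ⟨T, hTS⟩ := not_forall_not.1 h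
    obtain ⟨x, hx⟩ := T.isIrreducible.nonempty
    obtain ⟨y, hy, hyT⟩ := SetLike.exists_of_lt hTS
    exact ⟨x, hTS.le hx, y, hy, fun hxy => hyT (hxy ▸ hx)⟩
  · refine hmin {x} (lt_of_le_not_ge (singleton_subset_iff.2 hx) fun hle => hxy ?_)
    exact (IrreducibleCloseds.mem_singleton.1 (hle hy)).symm

theorem subsingleton_of_finite [T1Space X] {S : Set X} (hS : IsIrreducible S) (hfin : S.Finite) :
    S.Subsingleton := by
  obtain ⟨_, ⟨x, -, rfl⟩, hSx⟩ := exists_superset_of_subset_sUnion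
    (hfin.image singleton) (forall_mem_image.2 fun _ _ => isClosed_singleton) hS
    (by simp)
  exact subsingleton_of_subset_singleton hSx

end Irreducible

section Slicing

variable {X Y : Type*} [TopologicalSpace X] [TopologicalSpace Y]

/-- `H` satisfies the dimension theorem: every irreducible closed subset of `U ∩ H` lies in one
whose dimension is at least `dim U - 1`. Dimensions are heights in the order of irreducible closed
sets. -/
def IsSlicing (H : Set X) : Prop :=
  ∀ ⦃U A : IrreducibleCloseds X⦄, A ≤ U → (A : Set X) ⊆ H →
    ∃ T : IrreducibleCloseds X, A ≤ T ∧ T ≤ U ∧ (T : Set X) ⊆ H ∧ height U ≤ height T + 1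

namespace IsSlicing

theorem exists_mem [T1Space X] {H : Set X} (hH : IsSlicing H) {U : IrreducibleCloseds X} {a : X}
    (haU : a ∈ U) (haH : a ∈ H) :
    ∃ T : IrreducibleCloseds X, a ∈ T ∧ T ≤ U ∧ (T : Set X) ⊆ H ∧ height U ≤ height T + 1 := by
  obtain ⟨T, haT, hT⟩ := hH (U := U) (A := {a}) (singleton_subset_iff.2 haU)
    (singleton_subset_iff.2 haH)
  exact ⟨T, singleton_subset_iff.1 haT, hT⟩

theorem preimage {f : X → Y} (hf : IsClosedEmbedding f) {H : Set Y} (hH : IsSlicing H) :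
    IsSlicing (f ⁻¹' H) := by
  intro U A hAU hAH
  have hAH' : (A.map f hf.continuous : Set Y) ⊆ H := by
    rw [coe_map_of_isClosedEmbedding hf]
    exact image_subset_iff.2 hAH
  obtain ⟨T', hAT, hTU, hTH, hdim⟩ := hH (IrreducibleCloseds.map_mono hf.continuous hAU) hAH'
  have hTU' : (T' : Set Y) ⊆ f '' U := by
    rw [← coe_map_of_isClosedEmbedding hf]
    exact hTU
  obtain ⟨T, rfl, hT⟩ :=
    exists_map_eq_of_isClosedEmbedding hf (hTU'.trans (image_subset_range f U))
  refine ⟨T, ?_, ?_, ?_, ?_⟩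
  · rw [← SetLike.coe_subset_coe, hT]
    exact (map_le_iff hf.continuous).1 hAT
  · rw [← SetLike.coe_subset_coe, hT, ← preimage_image_eq U hf.injective]
    exact preimage_mono hTU'
  · rw [hT]
    exact preimage_mono hTH
  · simpa only [height_map_of_isClosedEmbedding hf] using hdim

theorem exists_forall_subset {ι : Type*} [Finite ι] {H : ι → Set X} (hH : ∀ i, IsSlicing (H i))
    {U A : IrreducibleCloseds X} (hAU : A ≤ U) (hA : ∀ i, (A : Set X) ⊆ H i) :
    ∃ T : IrreducibleCloseds X, A ≤ T ∧ T ≤ U ∧ (∀ i, (T : Set X) ⊆ H i) ∧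
      height U ≤ height T + Nat.card ι := by
  classical
  have := Fintype.ofFinite ι
  suffices h : ∀ s : Finset ι, ∃ T : IrreducibleCloseds X, A ≤ T ∧ T ≤ U ∧
      (∀ i ∈ s, (T : Set X) ⊆ H i) ∧ height U ≤ height T + s.card by
    simpa [Nat.card_eq_fintype_card] using h Finset.univ
  intro s
  induction s using Finset.induction_on with
  | empty => exact ⟨U, hAU, le_rfl, by simp, by simp⟩
  | insert i s hi ih =>
    obtain ⟨T, hAT, hTU, hT, hdim⟩ := ih
    obtain ⟨T', hAT', hT'T, hT', hdim'⟩ := hH i hAT (hA i)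
    refine ⟨T', hAT', hT'T.trans hTU, fun j hj => ?_, ?_⟩
    · obtain rfl | hj := Finset.mem_insert.1 hj
      exacts [hT', Subset.trans hT'T (hT j hj)]
    · calc height U ≤ height T + s.card := hdim
        _ ≤ height T' + 1 + s.card := by gcongr
        _ = height T' + (insert i s).card := by
          rw [Finset.card_insert_of_notMem hi]; push_cast; ring

end IsSlicing

end Slicing

/-! ### Finite powers of a Zariski geometry -/

/-- A set carrying a Zariski geometry, made available to instance search. -/
class HasZariskiGeometry (X : Type*) where
  geometry : ZariskiGeometry X

section Powers

variable {X : Type*} [HasZariskiGeometry X] {σ ρ : Type*} [Finite σ] [Finite ρ]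

/-- The topology of the geometry on a power `X^σ` with arbitrary finite index type, transported
from `X^n` along an enumeration of `σ`; by (Z0) the enumeration is irrelevant. -/
noncomputable instance powerTopology : TopologicalSpace (σ → X) :=
  .induced (· ∘ (Finite.equivFin σ).symm)
    ((HasZariskiGeometry.geometry (X := X)).τ (Nat.card σ))

theorem continuous_coord (g : ρ → σ ⊕ X) :
    Continuous fun (x : σ → X) i => Sum.elim x id (g i) := by
  let Z := HasZariskiGeometry.geometry (X := X)
  let _ := Z.τ (Nat.card σ)
  let _ := Z.τ (Nat.card ρ)
  have hcoord := Z.Z0_cont (Nat.card σ) (Nat.card ρ)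
    (fun i => (g ((Finite.equivFin ρ).symm i)).map (Finite.equivFin σ) id)
  have hdom : Continuous fun x : σ → X => x ∘ (Finite.equivFin σ).symm := continuous_induced_dom
  rw [continuous_induced_rng]
  convert hcoord.comp hdom using 1
  funext x i
  simp only [comp_apply]
  rcases g ((Finite.equivFin ρ).symm i) with j | c <;> simp

theorem continuous_comp_right (e : ρ → σ) : Continuous fun x : σ → X => x ∘ e :=
  continuous_coord fun i => Sum.inl (e i)

theorem continuous_sumElim_left (y : ρ → X) : Continuous fun x : σ → X => Sum.elim x y := by
  convert continuous_coord (Sum.elim (fun i : σ => Sum.inl i) (fun j => Sum.inr (y j)))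
    using 2 with x
  funext i
  rcases i with i | i <;> rfl

theorem continuous_sumElim_right (x : σ → X) : Continuous fun y : ρ → X => Sum.elim x y := by
  convert continuous_coord (Sum.elim (fun i => Sum.inr (x i)) (fun j : ρ => Sum.inl j))
    using 2 with y
  funext i
  rcases i with i | i <;> rfl

/-- The homeomorphism of powers induced by a bijection of the index types. -/
def reindex (e : σ ≃ ρ) : (σ → X) ≃ₜ (ρ → X) where
  toFun x := x ∘ e.symm
  invFun x := x ∘ e
  left_inv x := by funext i; simp
  right_inv x := by funext i; simp
  continuous_toFun := continuous_comp_right _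
  continuous_invFun := continuous_comp_right _

theorem powerTopology_fin (n : ℕ) :
    (powerTopology : TopologicalSpace (Fin n → X)) =
      (HasZariskiGeometry.geometry (X := X)).τ n := by
  let Z := HasZariskiGeometry.geometry (X := X)
  suffices h : ∀ m (_ : m = n) (e : Fin n ≃ Fin m),
      TopologicalSpace.induced (fun x : Fin n → X => x ∘ e.symm) (Z.τ m) = Z.τ n from
    h _ (Nat.card_fin n) (Finite.equivFin (Fin n))
  rintro m rfl e
  let _ := Z.τ m
  have hcont : Continuous fun x : Fin m → X => x ∘ e := Z.Z0_cont m m fun i => Sum.inl (e i)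
  have hcont' : Continuous fun x : Fin m → X => x ∘ e.symm :=
    Z.Z0_cont m m fun i => Sum.inl (e.symm i)
  refine le_antisymm ?_ (continuous_iff_le_induced.1 hcont')
  rw [← continuous_id_iff_le]
  convert @Continuous.comp _ _ _ (.induced (fun x : Fin m → X => x ∘ e.symm) (Z.τ m)) _ _ _ _
    hcont continuous_induced_dom using 1
  funext x i
  simp

instance : NoetherianSpace (σ → X) := by
  let _ := (HasZariskiGeometry.geometry (X := X)).τ (Nat.card σ)
  have := (HasZariskiGeometry.geometry (X := X)).noetherian (Nat.card σ)
  exact IsInducing.noetherianSpace (i := fun x : σ → X => x ∘ (Finite.equivFin σ).symm) ⟨rfl⟩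

theorem isClosed_diagonal (i j : σ) : IsClosed {x : σ → X | x i = x j} := by
  have hfin := (HasZariskiGeometry.geometry (X := X)).Z0_diag (Nat.card σ)
    (Finite.equivFin σ i) (Finite.equivFin σ j)
  rw [← powerTopology_fin] at hfin
  simpa [reindex] using hfin.preimage (reindex (Finite.equivFin σ)).continuous

theorem isClosed_coord_eq (i : σ) (c : X) : IsClosed {x : σ → X | x i = c} :=
  (isClosed_diagonal (Sum.inl i) (Sum.inr ())).preimage
    (continuous_sumElim_left fun _ : Unit => c)

instance : T1Space (σ → X) where
  t1 a := by
    have : ({a} : Set (σ → X)) = ⋂ i, {x | x i = a i} := by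
      ext x
      simp [funext_iff]
    rw [this]
    exact isClosed_iInter fun i => isClosed_coord_eq i (a i)

theorem isClosedEmbedding_sumElim_left (y : ρ → X) :
    IsClosedEmbedding fun x : σ → X => Sum.elim x y := by
  have hrange : range (fun x : σ → X => Sum.elim x y) = (fun z => z ∘ Sum.inr) ⁻¹' {y} := by
    ext z
    refine ⟨?_, fun hz => ⟨z ∘ Sum.inl, ?_⟩⟩
    · rintro ⟨x, rfl⟩
      rfl
    · exact hz ▸ Sum.elim_comp_inl_inr z
  refine ⟨.of_leftInverse (fun _ => rfl) (continuous_comp_right Sum.inl)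
    (continuous_sumElim_left y), ?_⟩
  rw [hrange]
  exact isClosed_singleton.preimage (continuous_comp_right Sum.inr)

theorem isSlicing_diagonal (i j : σ) : IsSlicing {x : σ → X | x i = x j} := by
  suffices h : ∀ (n : ℕ) (i j : Fin n), IsSlicing {x : Fin n → X | x i = x j} by
    simpa [reindex] using
      (h _ (Finite.equivFin σ i) (Finite.equivFin σ j)).preimage
        (reindex (Finite.equivFin σ)).isClosedEmbedding
  intro n i j U A hAU hA
  obtain ⟨T, hAT, hT⟩ := exists_isIrredComponentOf (U.isClosed.inter (isClosed_diagonal i j))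
    A.isIrreducible (subset_inter hAU hA)
  have hdim := (HasZariskiGeometry.geometry (X := X)).Z3 n U i j
  rw [← powerTopology_fin] at hdim
  specialize hdim U.isClosed U.isIrreducible T hT
  rw [setKrullDim_eq_height, setKrullDim_eq_height] at hdim
  exact ⟨T, hAT, hT.prop.1.trans inter_subset_left, hT.prop.1.trans inter_subset_right,
    by exact_mod_cast hdim⟩

theorem isSlicing_coord_eq (i : σ) (c : X) : IsSlicing {x : σ → X | x i = c} :=
  (isSlicing_diagonal (Sum.inl i) (Sum.inr ())).preimage
    (isClosedEmbedding_sumElim_left fun _ : Unit => c)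

theorem exists_closed_ssubset_closure_projection {C : Set (σ ⊕ ρ → X)} (hC : IsClosed C)
    (hne : C.Nonempty) :
    ∃ F : Set (σ → X), IsClosed F ∧ F ⊂ closure ((· ∘ Sum.inl) '' C) ∧
      closure ((· ∘ Sum.inl) '' C) \ F ⊆ (· ∘ Sum.inl) '' C := by
  let e : σ ⊕ ρ ≃ Fin (Nat.card σ + Nat.card ρ) :=
    ((Finite.equivFin σ).sumCongr (Finite.equivFin ρ)).trans finSumFinEquiv
  let Φ := reindex (X := X) e
  let φ := reindex (X := X) (Finite.equivFin σ)
  have hZ1 := (HasZariskiGeometry.geometry (X := X)).Z1 _ _ (Nat.le_add_right _ (Nat.card ρ))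
    (Φ '' C)
  rw [← powerTopology_fin, ← powerTopology_fin] at hZ1
  obtain ⟨F, hF, hFC, hCF⟩ := hZ1 (Φ.isClosedMap _ hC) (hne.image Φ)
  have hsquare : (· ∘ Fin.castLE (Nat.le_add_right _ (Nat.card ρ))) '' (Φ '' C) =
      φ '' ((· ∘ Sum.inl) '' C) := by
    rw [image_image, image_image]
    refine image_congr fun x _ => funext fun i => ?_
    change x (e.symm (Fin.castAdd _ i)) = x (Sum.inl ((Finite.equivFin σ).symm i))
    simp [e]
  rw [hsquare, ← φ.image_closure] at hFC hCF
  refine ⟨φ ⁻¹' F, hF.preimage φ.continuous, ⟨?_, fun h => hFC.2 (image_subset_iff.2 h)⟩, ?_⟩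
  · rw [← φ.injective.preimage_image (closure _)]
    exact preimage_mono hFC.1
  · rintro x ⟨hx, hxF⟩
    obtain ⟨y, hy, hyx⟩ := hCF ⟨mem_image_of_mem φ hx, hxF⟩
    exact φ.injective hyx ▸ hy

end Powers

/-! ### Dimension of products and projections -/

section Dimension

variable {X : Type*} [HasZariskiGeometry X] {σ ρ τ : Type*} [Finite σ] [Finite ρ] [Finite τ]

instance : WellFoundedLT (IrreducibleCloseds (σ → X)) :=
  StrictMono.wellFoundedLT (f := fun S => (⟨S, S.isClosed⟩ : Closeds (σ → X))) fun _ _ h => h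

theorem exists_lt_height_le_add_one {U : IrreducibleCloseds (σ → X)}
    (hU : (U : Set (σ → X)).Nontrivial) {a : σ → X} (ha : a ∈ U) :
    ∃ T < U, a ∈ T ∧ height U ≤ height T + 1 := by
  obtain ⟨w, hwU, hwa⟩ := hU.exists_ne a
  obtain ⟨i, hi⟩ := ne_iff.1 hwa
  obtain ⟨T, haT, hTU, hT, hdim⟩ := (isSlicing_coord_eq i (a i)).exists_mem ha rfl
  exact ⟨T, lt_of_le_not_ge hTU fun hUT => hi (hT (hUT hwU)), haT, hdim⟩

theorem height_eq_zero_of_subsingleton {U : IrreducibleCloseds (σ → X)}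
    (hU : (U : Set (σ → X)).Subsingleton) : height U = 0 := by
  by_contra h
  exact not_nontrivial_iff.2 hU (one_le_height_iff.1 (Order.one_le_iff_ne_zero.2 h))

/-- The product `A × B` in `X^(σ ⊕ ρ)`. -/
def prod (A : IrreducibleCloseds (σ → X)) (B : IrreducibleCloseds (ρ → X)) :
    IrreducibleCloseds (σ ⊕ ρ → X) where
  carrier := {z | z ∘ Sum.inl ∈ A ∧ z ∘ Sum.inr ∈ B}
  isClosed' := (A.isClosed.preimage (continuous_comp_right Sum.inl)).inter
    (B.isClosed.preimage (continuous_comp_right Sum.inr))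
  isIrreducible' := by
    obtain ⟨a, ha⟩ := A.isIrreducible.nonempty
    obtain ⟨b, hb⟩ := B.isIrreducible.nonempty
    refine ⟨⟨Sum.elim a b, ha, hb⟩, ?_⟩
    refine isPreirreducible_iff_isClosed_union_isClosed.2 fun F G hF hG hFG => ?_
    have hclosed : ∀ F : Set (σ ⊕ ρ → X), IsClosed F →
        IsClosed {x | ∀ y ∈ B, Sum.elim x y ∈ F} := fun F hF => by
      simp only [ofPred_forall]
      exact isClosed_biInter fun y _ => hF.preimage (continuous_sumElim_left y)
    have hfibre : (A : Set (σ → X)) ⊆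
        {x | ∀ y ∈ B, Sum.elim x y ∈ F} ∪ {x | ∀ y ∈ B, Sum.elim x y ∈ G} := fun x hx =>
      isPreirreducible_iff_isClosed_union_isClosed.1 B.isIrreducible.isPreirreducible _ _
        (hF.preimage (continuous_sumElim_right x)) (hG.preimage (continuous_sumElim_right x))
        fun y hy => hFG ⟨hx, hy⟩
    refine (isPreirreducible_iff_isClosed_union_isClosed.1 A.isIrreducible.isPreirreducible _ _
      (hclosed F hF) (hclosed G hG) hfibre).imp ?_ ?_ <;>
    exact fun h z hz => Sum.elim_comp_inl_inr z ▸ h hz.1 _ hz.2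

theorem mem_prod {A : IrreducibleCloseds (σ → X)} {B : IrreducibleCloseds (ρ → X)}
    {z : σ ⊕ ρ → X} : z ∈ prod A B ↔ z ∘ Sum.inl ∈ A ∧ z ∘ Sum.inr ∈ B :=
  Iff.rfl

theorem sumElim_mem_prod {A : IrreducibleCloseds (σ → X)} {B : IrreducibleCloseds (ρ → X)}
    {x : σ → X} {y : ρ → X} : Sum.elim x y ∈ prod A B ↔ x ∈ A ∧ y ∈ B :=
  Iff.rfl

theorem prod_mono_right {A : IrreducibleCloseds (σ → X)} {B B' : IrreducibleCloseds (ρ → X)}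
    (h : B ≤ B') : prod A B ≤ prod A B' :=
  fun _ hz => ⟨hz.1, h hz.2⟩

theorem prod_strictMono_right (A : IrreducibleCloseds (σ → X)) :
    StrictMono (prod A : IrreducibleCloseds (ρ → X) → _) := fun B B' h => by
  obtain ⟨x, hx⟩ := A.isIrreducible.nonempty
  refine lt_of_le_not_ge (prod_mono_right h.le) fun hle => h.not_ge fun y hy => ?_
  exact (hle (sumElim_mem_prod.2 ⟨hx, hy⟩)).2

theorem height_prod_singleton (A : IrreducibleCloseds (σ → X)) (b : ρ → X) :
    height (prod A {b}) = height A := by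
  have hemb := isClosedEmbedding_sumElim_left (σ := σ) b
  rw [← height_map_of_isClosedEmbedding hemb]
  congr 1
  refine IrreducibleCloseds.ext ?_
  rw [coe_map_of_isClosedEmbedding hemb]
  ext z
  refine ⟨fun ⟨hzA, hzb⟩ => ⟨z ∘ Sum.inl, hzA, ?_⟩, ?_⟩
  · exact IrreducibleCloseds.mem_singleton.1 hzb ▸ Sum.elim_comp_inl_inr z
  · rintro ⟨x, hx, rfl⟩
    exact ⟨hx, rfl⟩

/-- The closure of the projection of `T` to the coordinates selected by `e`. -/
noncomputable def proj (e : ρ → σ) (T : IrreducibleCloseds (σ → X)) : IrreducibleCloseds (ρ → X) :=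
  T.map (· ∘ e) (continuous_comp_right e)

theorem comp_mem_proj {e : ρ → σ} {T : IrreducibleCloseds (σ → X)} {x : σ → X} (hx : x ∈ T) :
    x ∘ e ∈ proj e T :=
  mem_map _ hx

theorem proj_le_iff {e : ρ → σ} {T : IrreducibleCloseds (σ → X)} {B : IrreducibleCloseds (ρ → X)} :
    proj e T ≤ B ↔ ∀ x ∈ T, x ∘ e ∈ B :=
  map_le_iff _

theorem proj_mono (e : ρ → σ) : Monotone (proj e : IrreducibleCloseds (σ → X) → _) :=
  IrreducibleCloseds.map_mono (continuous_comp_right e)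

theorem proj_subset_iff {e : ρ → σ} {T : IrreducibleCloseds (σ → X)} {F : Set (ρ → X)}
    (hF : IsClosed F) : (proj e T : Set (ρ → X)) ⊆ F ↔ ∀ x ∈ T, x ∘ e ∈ F :=
  map_subset_iff _ hF

theorem coord_eq_of_mem_proj {e : ρ → σ} {T : IrreducibleCloseds (σ → X)} {i : ρ} {c : X}
    (hT : ∀ x ∈ T, x (e i) = c) {y : ρ → X} (hy : y ∈ proj e T) : y i = c :=
  (proj_subset_iff (isClosed_coord_eq i c)).2 hT hy

theorem height_prod_le (A : IrreducibleCloseds (σ → X)) (B : IrreducibleCloseds (ρ → X)) :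
    height (prod A B) ≤ height A + height B := by
  induction B using WellFoundedLT.induction with | ind B ih
  obtain ⟨b, hb⟩ := B.isIrreducible.nonempty
  by_cases hB : (B : Set (ρ → X)).Nontrivial
  · obtain ⟨w, hwB, hwb⟩ := hB.exists_ne b
    obtain ⟨i, hi⟩ := ne_iff.1 hwb
    obtain ⟨x, hx⟩ := A.isIrreducible.nonempty
    obtain ⟨T, -, hTle, hT, hdim⟩ := (isSlicing_coord_eq (Sum.inr i) (b i)).exists_mem
      (U := prod A B) (a := Sum.elim x b) (sumElim_mem_prod.2 ⟨hx, hb⟩) rfl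
    have hlt : proj Sum.inr T < B := lt_of_le_not_ge (proj_le_iff.2 fun z hz => (hTle hz).2)
      fun hle => hi (coord_eq_of_mem_proj (e := Sum.inr) hT (hle hwB))
    calc height (prod A B) ≤ height T + 1 := hdim
      _ ≤ height (prod A (proj Sum.inr T)) + 1 := by
        grw [height_mono (show T ≤ prod A (proj Sum.inr T) from
          fun z hz => ⟨(hTle hz).1, comp_mem_proj hz⟩)]
      _ ≤ height A + height (proj Sum.inr T) + 1 := by grw [ih _ hlt]
      _ ≤ height A + height B := by
        rw [add_assoc]
        grw [height_add_one_le hlt]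
  · have hBb : B = {b} := IrreducibleCloseds.ext
      ((not_nontrivial_iff.1 hB).eq_singleton_of_mem hb)
    rw [hBb, height_prod_singleton]
    exact le_self_add

theorem le_height_prod (A : IrreducibleCloseds (σ → X)) (B : IrreducibleCloseds (ρ → X)) :
    height A + height B ≤ height (prod A B) := by
  induction B using WellFoundedLT.induction with | ind B ih
  obtain ⟨b, hb⟩ := B.isIrreducible.nonempty
  by_cases hB : (B : Set (ρ → X)).Nontrivial
  · obtain ⟨B', hB'B, -, hdim⟩ := exists_lt_height_le_add_one hB hb
    calc height A + height B ≤ height A + height B' + 1 := by grw [hdim, add_assoc]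
      _ ≤ height (prod A B') + 1 := by grw [ih B' hB'B]
      _ ≤ height (prod A B) := height_add_one_le (prod_strictMono_right A hB'B)
  · rw [height_eq_zero_of_subsingleton (not_nontrivial_iff.1 hB), add_zero,
      ← height_prod_singleton A b]
    exact height_mono (prod_mono_right (singleton_subset_iff.2 hb))

theorem height_prod (A : IrreducibleCloseds (σ → X)) (B : IrreducibleCloseds (ρ → X)) :
    height (prod A B) = height A + height B :=
  (height_prod_le A B).antisymm (le_height_prod A B)

/-- (Z1) is what keeps the fibres over a slice of the closure of the projection nonempty. -/
theorem exists_mem_proj_inl_forall_lt {T : IrreducibleCloseds (σ ⊕ ρ → X)} :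
    ∃ b ∈ proj Sum.inl T, ∀ B < proj Sum.inl T, b ∈ B → ∃ T' < T, B ≤ proj Sum.inl T' := by
  obtain ⟨F, hF, hFT, hTF⟩ :=
    exists_closed_ssubset_closure_projection T.isClosed T.isIrreducible.nonempty
  obtain ⟨b, hb, hbF⟩ := exists_of_ssubset hFT
  refine ⟨b, hb, fun B hBT hbB => ?_⟩
  let S : Set (σ ⊕ ρ → X) := T ∩ (· ∘ Sum.inl) ⁻¹' B
  have hcover : (B : Set (σ → X)) ⊆ F ∪ closure ((· ∘ Sum.inl) '' S) := fun y hy => by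
    by_cases hyF : y ∈ F
    · exact .inl hyF
    · obtain ⟨z, hz, rfl⟩ := hTF ⟨hBT.le hy, hyF⟩
      exact .inr (subset_closure ⟨z, ⟨hz, hy⟩, rfl⟩)
  have hBS : (B : Set (σ → X)) ⊆ closure ((· ∘ Sum.inl) '' S) :=
    (isPreirreducible_iff_isClosed_union_isClosed.1 B.isIrreducible.isPreirreducible _ _ hF
      isClosed_closure hcover).resolve_left fun hBF => hbF (hBF hbB)
  obtain ⟨T', hT'S, hBT'⟩ := exists_irreducibleCloseds_dominating
    (continuous_comp_right Sum.inl)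
    (T.isClosed.inter (B.isClosed.preimage (continuous_comp_right Sum.inl))) hBS
  refine ⟨T', lt_of_le_not_ge (fun z hz => (hT'S hz).1) fun hle => hBT.not_ge ?_, hBT'⟩
  exact proj_le_iff.2 fun z hz => (hT'S (hle hz)).2

theorem height_proj_inl_le (T : IrreducibleCloseds (σ ⊕ ρ → X)) :
    height (proj Sum.inl T) ≤ height T := by
  induction T using WellFoundedLT.induction with | ind T ih
  obtain ⟨b, hb, hfibres⟩ := exists_mem_proj_inl_forall_lt (T := T)
  by_cases hnt : (proj Sum.inl T : Set (σ → X)).Nontrivial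
  · obtain ⟨B, hBT, hbB, hdim⟩ := exists_lt_height_le_add_one hnt hb
    obtain ⟨T', hT'T, hBT'⟩ := hfibres B hBT hbB
    calc height (proj Sum.inl T) ≤ height B + 1 := hdim
      _ ≤ height (proj Sum.inl T') + 1 := by grw [height_mono hBT']
      _ ≤ height T' + 1 := by grw [ih T' hT'T]
      _ ≤ height T := height_add_one_le hT'T
  · rw [height_eq_zero_of_subsingleton (not_nontrivial_iff.1 hnt)]
    exact zero_le

theorem height_le_height_proj {e : ρ → σ} {T : IrreducibleCloseds (σ → X)}
    (he : InjOn (· ∘ e) (T : Set (σ → X))) : height T ≤ height (proj e T) := by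
  induction T using WellFoundedLT.induction with | ind T ih
  by_cases hT : (T : Set (σ → X)).Nontrivial
  · obtain ⟨x, hx, y, hy, hxy⟩ := hT
    obtain ⟨i, hi⟩ := ne_iff.1 fun h => hxy (he hx hy h)
    obtain ⟨T', -, hT'T, hT', hdim⟩ := (isSlicing_coord_eq (e i) (x (e i))).exists_mem hx rfl
    have hlt : T' < T := lt_of_le_not_ge hT'T fun hle => hi (hT' (hle hy)).symm
    have hlt' : proj e T' < proj e T := lt_of_le_not_ge (proj_mono e hT'T) fun hle =>
      hi (coord_eq_of_mem_proj (e := e) hT' (hle (comp_mem_proj hy))).symm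
    calc height T ≤ height T' + 1 := hdim
      _ ≤ height (proj e T') + 1 := by grw [ih T' hlt (he.mono hT'T)]
      _ ≤ height (proj e T) := height_add_one_le hlt'
  · rw [height_eq_zero_of_subsingleton (not_nontrivial_iff.1 hT)]
    exact zero_le

instance : IrreducibleSpace (Unit → X) := by
  have h := (HasZariskiGeometry.geometry (X := X)).Z2_irred
  rw [← powerTopology_fin] at h
  let e := reindex (X := X) (Equiv.ofUnique (Fin 1) Unit)
  exact e.surjective.irreducibleSpace e.continuous

theorem exists_reindex (e : σ ≃ ρ) (P : IrreducibleCloseds (σ → X)) :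
    ∃ Q : IrreducibleCloseds (ρ → X), (∀ x, x ∈ Q ↔ x ∘ e ∈ P) ∧ height Q = height P := by
  have hemb := (reindex (X := X) e).isClosedEmbedding
  refine ⟨P.map _ hemb.continuous, fun x => ?_, height_map_of_isClosedEmbedding hemb P⟩
  rw [← SetLike.mem_coe, coe_map_of_isClosedEmbedding hemb, Homeomorph.image_eq_preimage_symm]
  rfl

theorem exists_pi {ι : Type*} [Fintype ι] (A : ι → IrreducibleCloseds (τ → X)) :
    ∃ P : IrreducibleCloseds (ι × τ → X),
      (∀ x, x ∈ P ↔ ∀ i, (fun t => x (i, t)) ∈ A i) ∧ height P = ∑ i, height (A i) := by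
  revert A
  refine Fintype.induction_empty_option (P := fun ι _ => ∀ A : ι → IrreducibleCloseds (τ → X),
    ∃ P : IrreducibleCloseds (ι × τ → X),
      (∀ x, x ∈ P ↔ ∀ i, (fun t => x (i, t)) ∈ A i) ∧ height P = ∑ i, height (A i)) ?_ ?_ ?_ ι
  · intro α β _ e ih A
    let _ := Fintype.ofEquiv β e.symm
    obtain ⟨P, hP, hdim⟩ := ih (A ∘ e)
    obtain ⟨Q, hQ, hQP⟩ := exists_reindex (e.prodCongr (Equiv.refl τ)) P
    refine ⟨Q, fun x => ?_, ?_⟩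
    · rw [hQ, hP]
      exact e.forall_congr_right (q := fun b => (fun t => x (b, t)) ∈ A b)
    · rw [hQP, hdim]
      exact Fintype.sum_equiv e _ _ fun _ => rfl
  · refine fun A => ⟨{isEmptyElim}, fun x => ?_, ?_⟩
    · simpa using Subsingleton.elim _ _
    · simpa using height_eq_zero_of_subsingleton subsingleton_singleton
  · intro α _ ih A
    obtain ⟨P, hP, hdim⟩ := ih (fun i => A (some i))
    let e : (α × τ) ⊕ τ ≃ Option α × τ :=
      (((Equiv.optionEquivSumPUnit.{0} α).prodCongr (Equiv.refl τ)).trans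
        ((Equiv.sumProdDistrib _ _ _).trans
          ((Equiv.refl _).sumCongr (Equiv.punitProd τ)))).symm
    obtain ⟨Q, hQ, hQP⟩ := exists_reindex e (prod P (A none))
    refine ⟨Q, fun x => ?_, ?_⟩
    · rw [hQ, mem_prod, hP, Option.forall, and_comm]
      rfl
    · rw [hQP, height_prod, hdim, Fintype.sum_option, add_comm]

theorem exists_coe_eq_univ : ∃ U : IrreducibleCloseds (σ → X), (U : Set (σ → X)) = univ ∧
    height U = Nat.card σ * height (⊤ : IrreducibleCloseds (Unit → X)) := by
  have := Fintype.ofFinite σ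
  obtain ⟨P, hP, hdim⟩ := exists_pi fun _ : σ => (⊤ : IrreducibleCloseds (Unit → X))
  obtain ⟨Q, hQ, hQP⟩ := exists_reindex (Equiv.prodPUnit σ) P
  refine ⟨Q, eq_univ_of_forall fun x => (hQ x).2 ((hP _).2 fun _ => mem_univ _), ?_⟩
  rw [hQP, hdim, Finset.sum_const, Finset.card_univ, Nat.card_eq_fintype_card, nsmul_eq_mul]

instance : IrreducibleSpace (σ → X) := by
  obtain ⟨U, hU, -⟩ := exists_coe_eq_univ (X := X) (σ := σ)
  exact (irreducibleSpace_def _).2 (by rw [top_eq_univ, ← hU]; exact U.isIrreducible)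

theorem height_le_card (U : IrreducibleCloseds (σ → X)) : height U ≤ Nat.card σ := by
  obtain ⟨a, ha⟩ := U.isIrreducible.nonempty
  obtain ⟨T, -, -, hT, hdim⟩ := IsSlicing.exists_forall_subset
    (fun i => isSlicing_coord_eq i (a i)) (U := U) (A := {a}) (singleton_subset_iff.2 ha)
    (fun i => singleton_subset_iff.2 rfl)
  have hTa : (T : Set (σ → X)) ⊆ {a} := fun x hx => funext fun i => hT i hx
  rwa [height_eq_zero_of_subsingleton (subsingleton_of_subset_singleton hTa), zero_add] at hdim

theorem height_ne_top (U : IrreducibleCloseds (σ → X)) : height U ≠ ⊤ :=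
  ne_top_of_le_ne_top (ENat.natCast_ne_top _) (height_le_card U)

theorem height_top [Nontrivial X] : height (⊤ : IrreducibleCloseds (σ → X)) = Nat.card σ := by
  have hline : height (⊤ : IrreducibleCloseds (Unit → X)) = 1 := by
    refine le_antisymm (by simpa using height_le_card (⊤ : IrreducibleCloseds (Unit → X))) ?_
    obtain ⟨x, y, hxy⟩ := exists_pair_ne X
    exact one_le_height_iff.2 ⟨fun _ => x, trivial, fun _ => y, trivial, by simp [funext_iff, hxy]⟩
  obtain ⟨U, hU, hdim⟩ := exists_coe_eq_univ (X := X) (σ := σ)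
  rw [hline, mul_one] at hdim
  rw [← hdim]
  exact congrArg height (IrreducibleCloseds.ext hU.symm)

end Dimension

/-! ### Polynomial functions -/

section PolynomialFunctions

variable {K : Type*} [Field K] {σ ρ : Type*}

/-- Functions on `K^σ` given by a polynomial. -/
@[fun_prop]
def IsPolyFun (f : (σ → K) → K) : Prop :=
  ∃ p : MvPolynomial σ K, ∀ x, f x = MvPolynomial.eval x p

namespace IsPolyFun

@[fun_prop]
theorem const (c : K) : IsPolyFun fun _ : σ → K => c :=
  ⟨MvPolynomial.C c, by simp⟩

@[fun_prop]
theorem coord (i : σ) : IsPolyFun fun x : σ → K => x i :=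
  ⟨MvPolynomial.X i, by simp⟩

@[fun_prop]
theorem add {f g : (σ → K) → K} (hf : IsPolyFun f) (hg : IsPolyFun g) :
    IsPolyFun fun x => f x + g x := by
  obtain ⟨p, hp⟩ := hf
  obtain ⟨q, hq⟩ := hg
  exact ⟨p + q, by simp [hp, hq]⟩

@[fun_prop]
theorem sub {f g : (σ → K) → K} (hf : IsPolyFun f) (hg : IsPolyFun g) :
    IsPolyFun fun x => f x - g x := by
  obtain ⟨p, hp⟩ := hf
  obtain ⟨q, hq⟩ := hg
  exact ⟨p - q, by simp [hp, hq]⟩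

@[fun_prop]
theorem mul {f g : (σ → K) → K} (hf : IsPolyFun f) (hg : IsPolyFun g) :
    IsPolyFun fun x => f x * g x := by
  obtain ⟨p, hp⟩ := hf
  obtain ⟨q, hq⟩ := hg
  exact ⟨p * q, by simp [hp, hq]⟩

theorem prod {ι : Type*} (s : Finset ι) {f : ι → (σ → K) → K} (hf : ∀ i, IsPolyFun (f i)) :
    IsPolyFun fun x => ∏ i ∈ s, f i x := by
  choose p hp using hf
  exact ⟨∏ i ∈ s, p i, by simp [hp]⟩

theorem sum {ι : Type*} (s : Finset ι) {f : ι → (σ → K) → K} (hf : ∀ i, IsPolyFun (f i)) :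
    IsPolyFun fun x => ∑ i ∈ s, f i x := by
  choose p hp using hf
  exact ⟨∑ i ∈ s, p i, by simp [hp]⟩

theorem comp {f : (ρ → K) → K} (hf : IsPolyFun f) {g : (σ → K) → ρ → K}
    (hg : ∀ i, IsPolyFun fun x => g x i) : IsPolyFun fun x => f (g x) := by
  obtain ⟨p, hp⟩ := hf
  choose q hq using hg
  refine ⟨MvPolynomial.bind₁ q p, fun x => ?_⟩
  have hgx : g x = fun i => MvPolynomial.eval x (q i) := funext fun i => hq i x
  simp only [hp, hgx, MvPolynomial.eval, MvPolynomial.eval₂Hom_bind₁]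

theorem eval (p : MvPolynomial ρ K) {g : (σ → K) → ρ → K} (hg : ∀ i, IsPolyFun fun x => g x i) :
    IsPolyFun fun x => MvPolynomial.eval (g x) p :=
  comp ⟨p, fun _ => rfl⟩ hg

end IsPolyFun

end PolynomialFunctions

/-- The geometry on the field `K` has at least the Zariski closed sets as closed sets. -/
class RefinesZariski (K : Type*) [Field K] [HasZariskiGeometry K] : Prop where
  isClosed_of_zariskiClosedSet : ∀ (n : ℕ) (C : Set (Fin n → K)), ZariskiClosedSet K C →
    IsClosed[(HasZariskiGeometry.geometry (X := K)).τ n] C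

section Hypersurfaces

variable {K : Type*} [Field K] [HasZariskiGeometry K] [RefinesZariski K]
  {σ : Type*} [Finite σ]

theorem isClosed_zeros {f : (σ → K) → K} (hf : IsPolyFun f) : IsClosed {x | f x = 0} := by
  obtain ⟨p, hp⟩ := hf
  let q := MvPolynomial.rename (Finite.equivFin σ) p
  have hq := RefinesZariski.isClosed_of_zariskiClosedSet _
    {y | MvPolynomial.eval y q = 0} ⟨{q}, by simp⟩
  rw [← powerTopology_fin] at hq
  have heq : {x | f x = 0} = reindex (Finite.equivFin σ) ⁻¹' {y | MvPolynomial.eval y q = 0} := by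
    ext x
    simp [q, hp, reindex, MvPolynomial.eval_rename, comp_def]
  rw [heq]
  exact hq.preimage (reindex _).continuous

theorem isClosed_eq_of_isPolyFun {f g : (σ → K) → K} (hf : IsPolyFun f) (hg : IsPolyFun g) :
    IsClosed {x | f x = g x} := by
  simpa only [sub_eq_zero] using isClosed_zeros (hf.sub hg)

theorem exists_irreducibleCloseds_subset_graph {φ : (σ → K) → K} (hφ : IsPolyFun φ) :
    ∃ Γ : IrreducibleCloseds (σ ⊕ Unit → K),
      (∀ z ∈ Γ, z (Sum.inr ()) = φ (z ∘ Sum.inl)) ∧ proj Sum.inl Γ = ⊤ := by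
  have hclosed : IsClosed {z : σ ⊕ Unit → K | z (Sum.inr ()) = φ (z ∘ Sum.inl)} :=
    isClosed_eq_of_isPolyFun (by fun_prop) (hφ.comp fun i => .coord (Sum.inl i))
  obtain ⟨Γ, hΓ, hdom⟩ := exists_irreducibleCloseds_dominating
    (continuous_comp_right Sum.inl) hclosed (B := ⊤)
    fun x _ => subset_closure ⟨Sum.elim x fun _ => φ x, rfl, rfl⟩
  exact ⟨Γ, hΓ, top_le_iff.1 hdom⟩

-- The fibre product of the graph of `φ` with itself is cut out of a product by one diagonal.
theorem exists_diagonal_subset_equalizer {φ : (σ → K) → K} (hφ : IsPolyFun φ) :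
    ∃ R : IrreducibleCloseds (σ ⊕ σ → K), (∀ x, Sum.elim x x ∈ R) ∧
      (∀ z ∈ R, φ (z ∘ Sum.inl) = φ (z ∘ Sum.inr)) ∧
      (Nat.card σ + Nat.card σ : ℕ∞) ≤ height R + 1 := by
  obtain ⟨Γ, hΓ, hdom⟩ := exists_irreducibleCloseds_subset_graph hφ
  let u : (σ ⊕ Unit) ⊕ (σ ⊕ Unit) := Sum.inl (Sum.inr ())
  let u' : (σ ⊕ Unit) ⊕ (σ ⊕ Unit) := Sum.inr (Sum.inr ())
  obtain ⟨S, hΔS, hSΓ, hS, hdim⟩ := isSlicing_diagonal u u'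
    (U := prod Γ Γ) (A := proj (Sum.elim id id) Γ) (proj_le_iff.2 fun z hz => ⟨hz, hz⟩)
    ((proj_subset_iff (isClosed_diagonal u u')).2 fun _ _ => rfl)
  have hu : ∀ z ∈ S, z u = φ (z ∘ Sum.inl ∘ Sum.inl) := fun z hz => hΓ _ (hSΓ hz).1
  have hu' : ∀ z ∈ S, z u' = φ (z ∘ Sum.inr ∘ Sum.inl) := fun z hz => hΓ _ (hSΓ hz).2
  let e : σ ⊕ σ → (σ ⊕ Unit) ⊕ (σ ⊕ Unit) := Sum.map Sum.inl Sum.inl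
  have hinj : InjOn (· ∘ e) (S : Set ((σ ⊕ Unit) ⊕ (σ ⊕ Unit) → K)) := fun z hz w hw hzw => by
    have hl : z ∘ Sum.inl ∘ Sum.inl = w ∘ Sum.inl ∘ Sum.inl := funext fun i => congrFun hzw (.inl i)
    have hr : z ∘ Sum.inr ∘ Sum.inl = w ∘ Sum.inr ∘ Sum.inl := funext fun i => congrFun hzw (.inr i)
    funext i
    rcases i with (i | i) | (i | i)
    exacts [congrFun hl i, by rw [hu z hz, hu w hw, hl], congrFun hr i,
      by rw [hu' z hz, hu' w hw, hr]]
  refine ⟨proj e S, fun x => ?_, ?_, ?_⟩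
  · have hx : x ∈ proj Sum.inl Γ := hdom ▸ mem_top_irreducibleCloseds x
    have hdiag := (proj_subset_iff ((proj e S).isClosed.preimage
      (continuous_comp_right (Sum.elim id id)))).2 (fun z hz => ?_) hx
    · rw [mem_preimage, Sum.comp_elim] at hdiag
      exact hdiag
    · have := comp_mem_proj (e := e) (hΔS (comp_mem_proj hz))
      rw [mem_preimage, Sum.comp_elim]
      rwa [Sum.comp_elim, Sum.elim_comp_map] at this
  · refine (proj_subset_iff (isClosed_eq_of_isPolyFun (hφ.comp fun i => .coord (Sum.inl i))
      (hφ.comp fun i => .coord (Sum.inr i)))).2 fun z hz => ?_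
    exact (hu z hz).symm.trans ((hS hz).trans (hu' z hz))
  · have hcard : (Nat.card σ : ℕ∞) ≤ height Γ := by
      rw [← height_top (X := K), ← hdom]
      exact height_proj_inl_le Γ
    calc (Nat.card σ + Nat.card σ : ℕ∞) ≤ height (prod Γ Γ) := by
          rw [height_prod]
          gcongr
      _ ≤ height S + 1 := hdim
      _ ≤ height (proj e S) + 1 := by grw [height_le_height_proj hinj]

theorem exists_mem_subset_levelSet {φ : (σ → K) → K} (hφ : IsPolyFun φ) (a : σ → K) :
    ∃ T : IrreducibleCloseds (σ → K), a ∈ T ∧ (∀ x ∈ T, φ x = φ a) ∧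
      (Nat.card σ : ℕ∞) ≤ height T + 1 := by
  obtain ⟨R, hΔR, hR, hRdim⟩ := exists_diagonal_subset_equalizer hφ
  obtain ⟨T, haT, hTR, hT, hTdim⟩ := IsSlicing.exists_forall_subset
    (fun i : σ => isSlicing_coord_eq (Sum.inr i : σ ⊕ σ) (a i)) (U := R) (A := {Sum.elim a a})
    (singleton_subset_iff.2 (hΔR a)) fun i => singleton_subset_iff.2 rfl
  have hTa : ∀ z ∈ T, z ∘ Sum.inr = a := fun z hz => funext fun i => hT i hz
  have hinj : InjOn (· ∘ Sum.inl) (T : Set (σ ⊕ σ → K)) := fun z hz w hw hzw => by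
    rw [← Sum.elim_comp_inl_inr z, ← Sum.elim_comp_inl_inr w, hTa z hz, hTa w hw]
    exact congrArg (Sum.elim · a) hzw
  refine ⟨proj Sum.inl T, comp_mem_proj (haT rfl), ?_, ?_⟩
  · refine (proj_subset_iff (isClosed_eq_of_isPolyFun hφ (by fun_prop))).2 fun z hz => ?_
    exact (hR z (hTR hz)).trans (congrArg φ (hTa z hz))
  · have hfinal : (Nat.card σ + Nat.card σ : ℕ∞) ≤ height (proj Sum.inl T) + 1 + Nat.card σ := by
      grw [hRdim, hTdim, height_le_height_proj hinj]
      rw [add_right_comm]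
    exact (ENat.add_le_add_iff_right (ENat.natCast_ne_top _)).1 hfinal

end Hypersurfaces

/-! ### Continuity of polynomial and rational maps -/

section Lifting

variable {X : Type*} [HasZariskiGeometry X] {σ ρ : Type*} [Finite σ] [Finite ρ]

theorem eq_of_le_of_height_le {A B : IrreducibleCloseds (σ → X)} (hAB : A ≤ B)
    (hdim : height B ≤ height A) : A = B :=
  hAB.eq_of_not_lt fun hlt =>
    hdim.not_gt (height_strictMono hlt (height_ne_top A).lt_top)

theorem exists_le_proj_inl_eq {T : IrreducibleCloseds (σ ⊕ ρ → X)} (hT : Nat.card σ ≤ height T)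
    (hinj : InjOn (· ∘ Sum.inl) (T : Set (σ ⊕ ρ → X))) {z : σ ⊕ ρ → X} (hz : z ∈ T)
    {B : IrreducibleCloseds (σ → X)} (hzB : z ∘ Sum.inl ∈ B) :
    ∃ E ≤ T, z ∈ E ∧ proj Sum.inl E = B := by
  obtain ⟨W, hzW, hWU, hW, hdim⟩ := IsSlicing.exists_forall_subset
    (fun j : σ => isSlicing_diagonal (Sum.inl j) (Sum.inr (Sum.inl j) : σ ⊕ (σ ⊕ ρ)))
    (U := prod B T) (A := {Sum.elim (z ∘ Sum.inl) z}) (singleton_subset_iff.2 ⟨hzB, hz⟩)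
    fun j => singleton_subset_iff.2 rfl
  have hWeq : ∀ w ∈ W, w ∘ Sum.inl = (w ∘ Sum.inr) ∘ Sum.inl := fun w hw => funext fun j => hW j hw
  have hWinj : InjOn (· ∘ Sum.inl) (W : Set (σ ⊕ (σ ⊕ ρ) → X)) := fun w hw w' hw' h => by
    have hr : w ∘ Sum.inr = w' ∘ Sum.inr := hinj (hWU hw).2 (hWU hw').2 <|
      (hWeq w hw).symm.trans (h.trans (hWeq w' hw'))
    rw [← Sum.elim_comp_inl_inr w, ← Sum.elim_comp_inl_inr w', hr]
    exact congrArg (Sum.elim · (w' ∘ Sum.inr)) h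
  have hproj : proj Sum.inl W ≤ proj Sum.inl (proj Sum.inr W) := proj_le_iff.2 fun w hw =>
    hWeq w hw ▸ comp_mem_proj (comp_mem_proj hw)
  refine ⟨proj Sum.inr W, proj_le_iff.2 fun w hw => (hWU hw).2, comp_mem_proj (hzW rfl),
    eq_of_le_of_height_le ?_ ?_⟩
  · refine proj_le_iff.2 ((proj_subset_iff (B.isClosed.preimage (continuous_comp_right _))).2
      fun w hw => ?_)
    rw [mem_preimage, ← hWeq w hw]
    exact (hWU hw).1
  · have hBW : height B + Nat.card σ ≤ height W + Nat.card σ := by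
      grw [← hdim, height_prod, hT]
    calc height B ≤ height W := (ENat.add_le_add_iff_right (ENat.natCast_ne_top _)).1 hBW
      _ ≤ height (proj Sum.inl W) := height_le_height_proj hWinj
      _ ≤ height (proj Sum.inl (proj Sum.inr W)) := height_mono hproj

theorem mem_of_comp_inl_mem_closure {Γ S : Set (σ ⊕ ρ → X)} (hΓ : IsClosed Γ)
    (hinj : InjOn (· ∘ Sum.inl) Γ)
    (hpure : ∀ z ∈ Γ, ∃ T : IrreducibleCloseds (σ ⊕ ρ → X),
      z ∈ T ∧ (T : Set (σ ⊕ ρ → X)) ⊆ Γ ∧ Nat.card σ ≤ height T)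
    (hS : IsClosed S) {z : σ ⊕ ρ → X} (hz : z ∈ Γ)
    (hzS : z ∘ Sum.inl ∈ closure ((· ∘ Sum.inl) '' (Γ ∩ S))) : z ∈ S := by
  obtain ⟨S₁, hS₁, hzS₁⟩ := exists_irreducibleCloseds_dominating (continuous_comp_right Sum.inl)
    (hΓ.inter hS) (B := {z ∘ Sum.inl}) (singleton_subset_iff.2 hzS)
  obtain ⟨F, hF, hFS₁, hS₁F⟩ :=
    exists_closed_ssubset_closure_projection S₁.isClosed S₁.isIrreducible.nonempty
  obtain ⟨T, hzT, hTΓ, hT⟩ := hpure z hz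
  obtain ⟨E, hET, hzE, hE⟩ := exists_le_proj_inl_eq hT (hinj.mono hTΓ) hzT
    (B := proj Sum.inl S₁) (hzS₁ rfl)
  have hcover : (E : Set (σ ⊕ ρ → X)) ⊆ S ∪ (· ∘ Sum.inl) ⁻¹' F := fun w hw => by
    by_cases hwF : w ∘ Sum.inl ∈ F
    · exact .inr hwF
    · have hwS₁ : w ∘ Sum.inl ∈ proj Sum.inl S₁ := hE ▸ comp_mem_proj hw
      obtain ⟨w', hw', hww'⟩ := hS₁F ⟨hwS₁, hwF⟩
      exact .inl (hinj (hS₁ hw').1 (hTΓ (hET hw)) hww' ▸ (hS₁ hw').2)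
  refine (isPreirreducible_iff_isClosed_union_isClosed.1 E.isIrreducible.isPreirreducible _ _ hS
    (hF.preimage (continuous_comp_right _)) hcover).resolve_right (fun hEF => hFS₁.2 ?_) hzE
  change (proj Sum.inl S₁ : Set (σ → X)) ⊆ F
  rw [← hE]
  exact (proj_subset_iff hF).2 hEF

end Lifting

section PolynomialMaps

variable {K : Type*} [Field K] [HasZariskiGeometry K] [RefinesZariski K]
  {σ ρ : Type*} [Finite σ] [Finite ρ]

theorem continuousOn_sumElim_of_graph {φ : (σ ⊕ Unit → K) → K} (hφ : IsPolyFun φ)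
    {O : Set (σ → K)} {g : (σ → K) → K}
    (hgraph : ∀ x u, φ (Sum.elim x fun _ => u) = 0 ↔ x ∈ O ∧ u = g x) :
    ContinuousOn (fun x => (Sum.elim x fun _ => g x : σ ⊕ Unit → K)) O := by
  have hgraph' : ∀ z : σ ⊕ Unit → K,
      φ z = 0 ↔ z ∘ Sum.inl ∈ O ∧ (Sum.elim (z ∘ Sum.inl) fun _ => g (z ∘ Sum.inl)) = z := by
    intro z
    rw [← Sum.elim_comp_inl_inr z]
    refine (hgraph (z ∘ Sum.inl) (z (Sum.inr ()))).trans (and_congr_right fun _ => ?_)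
    simp [eq_comm, funext_iff, Unique.forall_iff]
  refine continuousOn_iff_isClosed.2 fun S hS => ⟨closure _, isClosed_closure,
    (subset_inter subset_closure inter_subset_right).antisymm fun x ⟨hx, hxO⟩ => ⟨?_, hxO⟩⟩
  have hlift : (fun x => Sum.elim x fun _ => g x) ⁻¹' S ∩ O ⊆
      (· ∘ Sum.inl) '' ({z | φ z = 0} ∩ S) := fun y hy =>
    ⟨Sum.elim y fun _ => g y, ⟨(hgraph _ _).2 ⟨hy.2, rfl⟩, hy.1⟩, rfl⟩
  refine mem_of_comp_inl_mem_closure (Γ := {z | φ z = 0}) (z := Sum.elim x fun _ => g x)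
    (isClosed_zeros hφ) (fun z hz w hw hzw => ?_) (fun z hz => ?_) hS ((hgraph _ _).2 ⟨hxO, rfl⟩)
    (closure_mono hlift hx)
  · rw [← ((hgraph' z).1 hz).2, ← ((hgraph' w).1 hw).2]
    exact congrArg (fun y => Sum.elim y fun _ => g y) hzw
  · obtain ⟨T, hzT, hT, hdim⟩ := exists_mem_subset_levelSet hφ z
    refine ⟨T, hzT, fun w hw => (hT w hw).trans hz, ?_⟩
    rw [Nat.card_sum, Nat.card_unique (α := Unit), Nat.cast_add, Nat.cast_one] at hdim
    exact (ENat.add_le_add_iff_right ENat.one_ne_top).1 hdim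

theorem continuous_sumElim_of_isPolyFun {g : (σ → K) → K} (hg : IsPolyFun g) :
    Continuous fun x => (Sum.elim x fun _ => g x : σ ⊕ Unit → K) := by
  rw [← continuousOn_univ]
  refine continuousOn_sumElim_of_graph (φ := fun z => z (Sum.inr ()) - g (z ∘ Sum.inl))
    (.sub (by fun_prop) (hg.comp fun i => .coord (Sum.inl i))) fun x u => ?_
  simp [sub_eq_zero]

theorem continuousOn_sumElim_inv {h : (σ → K) → K} (hh : IsPolyFun h) :
    ContinuousOn (fun x => (Sum.elim x fun _ => (h x)⁻¹ : σ ⊕ Unit → K)) {x | h x ≠ 0} := by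
  refine continuousOn_sumElim_of_graph (φ := fun z => h (z ∘ Sum.inl) * z (Sum.inr ()) - 1)
    (.sub (.mul (hh.comp fun i => .coord (Sum.inl i)) (by fun_prop)) (by fun_prop)) fun x u => ?_
  simp only [Sum.elim_comp_inl, Sum.elim_inr, sub_eq_zero, mem_ofPred_eq]
  exact ⟨fun hu => ⟨left_ne_zero_of_mul_eq_one hu, eq_inv_of_mul_eq_one_right hu⟩,
    fun ⟨hx, hu⟩ => hu ▸ mul_inv_cancel₀ hx⟩

theorem continuous_sumElim_of_forall_isPolyFun {Φ : (σ → K) → ρ → K}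
    (hΦ : ∀ i, IsPolyFun fun x => Φ x i) : Continuous fun x => Sum.elim x (Φ x) := by
  refine Finite.induction_empty_option (P := fun ρ => ∀ [Finite ρ] (Φ : (σ → K) → ρ → K),
    (∀ i, IsPolyFun fun x => Φ x i) → Continuous fun x => Sum.elim x (Φ x)) ?_ ?_ ?_ ρ Φ hΦ
  · intro α β e ih _ Φ hΦ
    have := Finite.of_equiv β e.symm
    convert (continuous_comp_right (Sum.map id e.symm)).comp
      (ih (fun x => Φ x ∘ e) fun i => hΦ (e i)) using 2 with x
    funext i
    rcases i with i | i <;> simp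
  · intro _ Φ _
    convert continuous_comp_right (X := K) (Sum.elim id PEmpty.elim : σ ⊕ PEmpty → σ) using 2 with x
    funext i
    rcases i with i | i
    exacts [rfl, i.elim]
  · intro α _ ih _ Φ hΦ
    have htail := ih (fun x => Φ x ∘ some) fun i => hΦ (some i)
    have hhead := continuous_sumElim_of_isPolyFun (σ := σ ⊕ α)
      (g := fun z => Φ (z ∘ Sum.inl) none) ((hΦ none).comp fun i => .coord (Sum.inl i))
    let e : σ ⊕ Option α → (σ ⊕ α) ⊕ Unit := Sum.elim (fun i => .inl (.inl i))
      fun o => o.elim (.inr ()) fun a => .inl (.inr a)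
    convert (continuous_comp_right e).comp (hhead.comp htail) using 2 with x
    funext i
    rcases i with i | (_ | i) <;> rfl

theorem continuous_of_forall_isPolyFun {Φ : (σ → K) → ρ → K}
    (hΦ : ∀ i, IsPolyFun fun x => Φ x i) : Continuous Φ :=
  (continuous_comp_right Sum.inr).comp (continuous_sumElim_of_forall_isPolyFun hΦ)

theorem continuousOn_div_of_forall_isPolyFun {Φ : (σ → K) → ρ → K}
    (hΦ : ∀ i, IsPolyFun fun x => Φ x i) {h : (σ → K) → K} (hh : IsPolyFun h) :
    ContinuousOn (fun x i => Φ x i / h x) {x | h x ≠ 0} := by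
  simp only [div_eq_mul_inv]
  exact (continuous_of_forall_isPolyFun
    (Φ := fun (z : σ ⊕ Unit → K) i => Φ (z ∘ Sum.inl) i * z (Sum.inr ()))
    fun i => .mul ((hΦ i).comp fun j => .coord (Sum.inl j)) (by fun_prop)).comp_continuousOn
      (continuousOn_sumElim_inv hh)

theorem div_mem_closure {S : Set (σ → K)} {T : Set (ρ → K)}
    {Φ : (σ → K) → ρ → K} (hΦ : ∀ i, IsPolyFun fun x => Φ x i) {h : (σ → K) → K} (hh : IsPolyFun h)
    (hST : ∀ x ∈ S, h x ≠ 0 → (fun i => Φ x i / h x) ∈ T) {z : σ → K} (hz : z ∈ closure S)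
    (hz₀ : h z ≠ 0) : (fun i => Φ z i / h z) ∈ closure T := by
  have hopen : IsOpen {x | h x ≠ 0} := (isClosed_zeros hh).isOpen_compl
  exact ((continuousOn_div_of_forall_isPolyFun hΦ hh z hz₀).mono inter_subset_left).mem_closure
    (hopen.inter_closure ⟨hz₀, hz⟩) fun x hx => hST x hx.2 hx.1

theorem isClosedEmbedding_sumElim_of_forall_isPolyFun {Φ : (σ → K) → ρ → K}
    (hΦ : ∀ i, IsPolyFun fun x => Φ x i) : IsClosedEmbedding fun x => Sum.elim (Φ x) x := by
  have hcont : Continuous fun x => Sum.elim (Φ x) x :=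
    continuous_of_forall_isPolyFun (Sum.rec hΦ .coord)
  refine ⟨.of_leftInverse (fun _ => rfl) (continuous_comp_right Sum.inr) hcont, ?_⟩
  have hrange : range (fun x => Sum.elim (Φ x) x) =
      ⋂ j, {z | z (Sum.inl j) = Φ (z ∘ Sum.inr) j} := by
    ext z
    simp only [mem_range, mem_iInter, mem_ofPred_eq]
    refine ⟨?_, fun hz => ⟨z ∘ Sum.inr, ?_⟩⟩
    · rintro ⟨x, rfl⟩ j
      rfl
    · rw [← (funext hz : z ∘ Sum.inl = _), Sum.elim_comp_inl_inr]
  rw [hrange]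
  exact isClosed_iInter fun j =>
    isClosed_eq_of_isPolyFun (by fun_prop) ((hΦ j).comp fun i => .coord (Sum.inr i))

theorem isSlicing_zeros {φ : (σ → K) → K} (hφ : IsPolyFun φ) : IsSlicing {x | φ x = 0} :=
  (isSlicing_coord_eq (Sum.inl ()) 0).preimage
    (isClosedEmbedding_sumElim_of_forall_isPolyFun (Φ := fun x (_ : Unit) => φ x) fun _ => hφ)

theorem height_map_le_of_forall_isPolyFun {Φ : (σ → K) → ρ → K}
    (hΦ : ∀ i, IsPolyFun fun x => Φ x i) (T : IrreducibleCloseds (σ → K)) :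
    height (T.map Φ (continuous_of_forall_isPolyFun hΦ)) ≤ height T := by
  have hemb := isClosedEmbedding_sumElim_of_forall_isPolyFun hΦ
  let G := T.map _ hemb.continuous
  calc height (T.map Φ (continuous_of_forall_isPolyFun hΦ)) ≤ height (proj Sum.inl G) :=
        height_mono ((map_le_iff _).2 fun x hx => comp_mem_proj (e := Sum.inl) (mem_map _ hx))
    _ ≤ height G := height_proj_inl_le G
    _ = height T := height_map_of_isClosedEmbedding hemb T

end PolynomialMaps

/-! ### Limits of projective points along a pencil -/

section Limits

variable {K : Type*} [Field K] [HasZariskiGeometry K] [RefinesZariski K]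
  {σ κ : Type*} [Finite σ] [Finite κ]

theorem map_const_eq_top {J : IrreducibleCloseds (σ → K)} {s : (σ → K) → K} (hs : IsPolyFun s)
    (hsJ : (s '' (J : Set (σ → K))).Nontrivial) :
    J.map (fun x (_ : Unit) => s x) (continuous_of_forall_isPolyFun fun _ => hs) = ⊤ := by
  refine eq_of_le_of_height_le le_top ?_
  rw [height_top, Nat.card_unique, Nat.cast_one, one_le_height_iff]
  obtain ⟨_, ⟨x, hx, rfl⟩, _, ⟨y, hy, rfl⟩, hxy⟩ := hsJ
  exact ⟨_, mem_map _ hx, _, mem_map _ hy, fun h => hxy (congrFun h ())⟩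

theorem exists_ne_zero_mem_closure_smul {J : IrreducibleCloseds (σ → K)} {s : (σ → K) → K}
    (hs : IsPolyFun s) (hsJ : (s '' (J : Set (σ → K))).Nontrivial) {ψ : (σ → K) → κ → K}
    (hψ : ∀ i, IsPolyFun fun x => ψ x i) (hψJ : ∃ x ∈ J, ψ x ≠ 0) (s₀ : K) :
    ∃ w : κ → K, w ≠ 0 ∧ (Sum.elim (fun _ => s₀) w : Unit ⊕ κ → K) ∈
      closure {z | ∃ x ∈ J, ∃ t : K, z = Sum.elim (fun _ => s x) (t • ψ x)} := by
  let G : (σ ⊕ Unit → K) → Unit ⊕ κ → K := fun z =>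
    Sum.elim (fun _ => s (z ∘ Sum.inl)) (z (Sum.inr ()) • ψ (z ∘ Sum.inl))
  have hG : Continuous G := continuous_of_forall_isPolyFun <| Sum.rec
    (fun _ => hs.comp fun i => .coord (Sum.inl i))
    fun i => .mul (.coord (Sum.inr ())) ((hψ i).comp fun i => .coord (Sum.inl i))
  let D := (prod J ⊤).map G hG
  have hmem : ∀ x ∈ J, ∀ t : K, Sum.elim (fun _ => s x) (t • ψ x) ∈ D := fun x hx t =>
    mem_map hG (x := Sum.elim x fun _ => t) (sumElim_mem_prod.2 ⟨hx, mem_top_irreducibleCloseds _⟩)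
  have hline : prod ⊤ {0} < D := by
    refine lt_of_le_not_ge (fun z ⟨_, hz⟩ => ?_) fun hD => ?_
    · have hsub := (map_subset_iff (S := J) (continuous_of_forall_isPolyFun fun _ => hs)
        (D.isClosed.preimage (continuous_sumElim_left (0 : κ → K)))).2 fun x hx => by
          simpa using hmem x hx 0
      rw [map_const_eq_top hs hsJ] at hsub
      rw [← Sum.elim_comp_inl_inr z, show z ∘ Sum.inr = 0 from hz]
      exact hsub (mem_top_irreducibleCloseds _)
    · obtain ⟨x, hx, hψx⟩ := hψJ
      exact hψx (by simpa using (hD (hmem x hx 1)).2)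
  have hD : 2 ≤ height D := by
    have h := height_strictMono hline (height_ne_top _).lt_top
    rw [height_prod_singleton, height_top, Nat.card_unique, Nat.cast_one] at h
    exact Order.add_one_le_of_lt h
  obtain ⟨T, -, hTD, hT, hdim⟩ := (isSlicing_coord_eq (Sum.inl ()) s₀).exists_mem
    (hline.le (sumElim_mem_prod.2 ⟨mem_top_irreducibleCloseds fun _ => s₀, rfl⟩)) rfl
  have hTnt : 1 ≤ height T :=
    (ENat.add_le_add_iff_right ENat.one_ne_top).1 (hD.trans hdim)
  obtain ⟨w, hw, hw₀⟩ := (one_le_height_iff.1 hTnt).exists_ne (Sum.elim (fun _ => s₀) 0)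
  have hws : w = Sum.elim (fun _ => s₀) (w ∘ Sum.inr) := by
    conv_lhs => rw [← Sum.elim_comp_inl_inr w, show w ∘ Sum.inl = _ from funext fun _ => hT hw]
  refine ⟨w ∘ Sum.inr, fun h => hw₀ (h ▸ hws), ?_⟩
  rw [← hws]
  refine (map_subset_iff hG isClosed_closure).2 (fun z hz => ?_) (hTD hw)
  exact subset_closure ⟨_, hz.1, _, rfl⟩

-- Apply the previous statement to the Segre product of the `φ i`; any nonzero coordinate of the
-- limit determines nonzero representatives of all its factors.
theorem exists_forall_ne_zero_mem_closure_smul {ι : Type*} [Finite ι]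
    {J : IrreducibleCloseds (σ → K)} {s : (σ → K) → K}
    (hs : IsPolyFun s) (hsJ : (s '' (J : Set (σ → K))).Nontrivial) {φ : ι → (σ → K) → κ → K}
    (hφ : ∀ i k, IsPolyFun fun x => φ i x k) (hφJ : ∃ x ∈ J, ∀ i, φ i x ≠ 0) (s₀ : K) :
    ∃ V : ι → κ → K, (∀ i, V i ≠ 0) ∧ (Sum.elim (fun _ => s₀) (uncurry V) : Unit ⊕ ι × κ → K) ∈
      closure {z | ∃ x ∈ J, ∃ t : ι → K,
        z = Sum.elim (fun _ => s x) (uncurry fun i => t i • φ i x)} := by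
  classical
  have := Fintype.ofFinite ι
  have hsegre : ∃ x ∈ J, (fun c : ι → κ => ∏ i, φ i x (c i)) ≠ 0 := by
    obtain ⟨x, hx, hφx⟩ := hφJ
    choose c hc using fun i => ne_iff.1 (hφx i)
    exact ⟨x, hx, ne_iff.2 ⟨c, Finset.prod_ne_zero_iff.2 fun i _ => hc i⟩⟩
  obtain ⟨w, hw, hwJ⟩ := exists_ne_zero_mem_closure_smul hs hsJ
    (fun c : ι → κ => .prod _ fun i => hφ i (c i)) hsegre s₀
  obtain ⟨c, hc⟩ := ne_iff.1 hw
  refine ⟨fun i k => w (update c i k), fun i h => hc ?_, ?_⟩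
  · simpa using congrFun h (c i)
  · let e : Unit ⊕ ι × κ → Unit ⊕ (ι → κ) := Sum.map id fun ik => update c ik.1 ik.2
    have hlim := map_mem_closure (continuous_comp_right (X := K) e) hwJ (t := {z | ∃ x ∈ J,
      ∃ t : ι → K, z = Sum.elim (fun _ => s x) (uncurry fun i => t i • φ i x)}) ?_
    · convert hlim using 1
      funext i
      rcases i with i | i <;> rfl
    · rintro _ ⟨x, hx, t, rfl⟩
      refine ⟨x, hx, fun i => t * ∏ j ∈ {i}ᶜ, φ j x (c j), funext ?_⟩
      rintro (_ | ⟨i, k⟩)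
      · rfl
      · have hrest : ∏ j ∈ {i}ᶜ, φ j x (update c i k j) = ∏ j ∈ {i}ᶜ, φ j x (c j) :=
          Finset.prod_congr rfl fun j hj => by rw [update_of_ne (by simpa using hj)]
        simp only [comp_apply, e, Sum.map_inr, Sum.elim_inr, Pi.smul_apply, smul_eq_mul, uncurry]
        rw [Fintype.prod_eq_mul_prod_compl i, update_self, hrest]
        ring

end Limits

/-! ### Lines in general position -/

section Parametrizations

variable {K : Type*} [Field K] {σ : Type*}

/-- The parametrization `(p, t) ↦ (t • p, t)` of the affine cone over a subset of `K^σ`. -/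
def coneParam (z : σ ⊕ Unit → K) : σ ⊕ Unit → K :=
  Sum.elim (z (Sum.inr ()) • z ∘ Sum.inl) (z ∘ Sum.inr)

theorem isPolyFun_coneParam (i : σ ⊕ Unit) : IsPolyFun fun z : σ ⊕ Unit → K => coneParam z i :=
  match i with
  | .inl i => .mul (.coord (Sum.inr ())) (.coord (Sum.inl i))
  | .inr j => .coord (Sum.inr j)

/-- The parametrization `(p, p', t) ↦ (p, p', t • (p' - p))` of secant vectors at pairs of points
of `K^σ`. -/
def secantParam (z : (σ ⊕ σ) ⊕ Unit → K) : (σ ⊕ σ) ⊕ σ → K :=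
  Sum.elim (z ∘ Sum.inl) (z (Sum.inr ()) • (z ∘ Sum.inl ∘ Sum.inr - z ∘ Sum.inl ∘ Sum.inl))

theorem isPolyFun_secantParam (i : (σ ⊕ σ) ⊕ σ) :
    IsPolyFun fun z : (σ ⊕ σ) ⊕ Unit → K => secantParam z i :=
  match i with
  | .inl i => .coord (Sum.inl i)
  | .inr j =>
    .mul (.coord (Sum.inr ())) (.sub (.coord (Sum.inl (Sum.inr j))) (.coord (Sum.inl (Sum.inl j))))

end Parametrizations

section Density

variable {K : Type*} [Field K] [HasZariskiGeometry K] {σ ρ : Type*} [Finite σ] [Finite ρ]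

theorem dense_of_forall_coord_ne_zero (i : σ) {A : Set (σ → K)}
    (hA : ∀ x, x i ≠ 0 → x ∈ closure A) : Dense A :=
  dense_closure.1 (((isClosed_coord_eq i (0 : K)).isOpen_compl.dense
    ⟨fun _ => 1, one_ne_zero⟩).mono hA)

variable [RefinesZariski K]

theorem card_lt_height_of_dense_image {U : IrreducibleCloseds (σ → K)} {S : Set (σ → K)}
    (hS : IsClosed S) (hSU : S ⊂ U) {Φ : (σ → K) → ρ → K} (hΦ : ∀ i, IsPolyFun fun x => Φ x i)
    (hdense : Dense (Φ '' S)) : (Nat.card ρ : ℕ∞) < height U := by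
  obtain ⟨T, hTS, hT⟩ := exists_irreducibleCloseds_dominating (continuous_of_forall_isPolyFun hΦ) hS
    (B := ⊤) fun x _ => hdense x
  calc (Nat.card ρ : ℕ∞) = height (⊤ : IrreducibleCloseds (ρ → K)) := height_top.symm
    _ ≤ height (T.map Φ _) := height_mono hT
    _ ≤ height T := height_map_le_of_forall_isPolyFun hΦ T
    _ < height U := height_strictMono (hTS.trans_ssubset hSU) (height_ne_top T).lt_top

/-- The affine cone over `C`: the closure of the set of all `(t • p, t)` with `p ∈ C`. The part in
the hyperplane where the last coordinate vanishes lies over the points of `C` at infinity. -/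
noncomputable def cone (C : IrreducibleCloseds (σ → K)) : IrreducibleCloseds (σ ⊕ Unit → K) :=
  (prod C ⊤).map coneParam (continuous_of_forall_isPolyFun isPolyFun_coneParam)

theorem sumElim_smul_mem_cone {C : IrreducibleCloseds (σ → K)} {p : σ → K} (hp : p ∈ C) (t : K) :
    Sum.elim (t • p) (fun _ => t) ∈ cone C :=
  mem_map (x := Sum.elim p fun _ => t) _ ⟨hp, mem_top_irreducibleCloseds _⟩

theorem cone_subset_iff {C : IrreducibleCloseds (σ → K)} {F : Set (σ ⊕ Unit → K)}
    (hF : IsClosed F) :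
    (cone C : Set (σ ⊕ Unit → K)) ⊆ F ↔ ∀ p ∈ C, ∀ t : K, Sum.elim (t • p) (fun _ => t) ∈ F :=
  ⟨fun h _ hp t => h (sumElim_smul_mem_cone hp t),
    fun h => (map_subset_iff _ hF).2 fun z hz => h _ hz.1 (z (Sum.inr ()))⟩

theorem continuous_const_smul (t : K) : Continuous fun x : σ → K => t • x :=
  continuous_of_forall_isPolyFun fun i => .mul (.const t) (.coord i)

theorem smul_mem_cone {C : IrreducibleCloseds (σ → K)} {v : σ ⊕ Unit → K} (hv : v ∈ cone C)
    (t : K) : t • v ∈ cone C := by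
  refine (cone_subset_iff ((cone C).isClosed.preimage (continuous_const_smul t))).2
    (fun p hp u => ?_) hv
  have hscale : t • Sum.elim (u • p) (fun _ : Unit => u) =
      Sum.elim ((t * u) • p) fun _ => t * u := by
    ext (i | _) <;> simp [mul_assoc]
  exact mem_preimage.2 (hscale ▸ sumElim_smul_mem_cone hp (t * u))

theorem height_cone_le (C : IrreducibleCloseds (σ → K)) : height (cone C) ≤ height C + 1 := by
  refine (height_map_le_of_forall_isPolyFun isPolyFun_coneParam _).trans_eq ?_
  rw [height_prod, height_top, Nat.card_unique, Nat.cast_one]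

/-- The secant variety of `C`: the closure of the set of all `(p, p', t • (p' - p))` with
`p, p' ∈ C`. The vectors over a diagonal point `(p, p)` are tangent to `C` at `p`. -/
noncomputable def secants (C : IrreducibleCloseds (σ → K)) :
    IrreducibleCloseds ((σ ⊕ σ) ⊕ σ → K) :=
  (prod (prod C C) ⊤).map secantParam (continuous_of_forall_isPolyFun isPolyFun_secantParam)

theorem sumElim_smul_sub_mem_secants {C : IrreducibleCloseds (σ → K)} {p p' : σ → K} (hp : p ∈ C)
    (hp' : p' ∈ C) (t : K) : Sum.elim (Sum.elim p p') (t • (p' - p)) ∈ secants C :=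
  mem_map (x := Sum.elim (Sum.elim p p') fun _ => t) _
    ⟨⟨hp, hp'⟩, mem_top_irreducibleCloseds _⟩

theorem secants_subset_iff {C : IrreducibleCloseds (σ → K)} {F : Set ((σ ⊕ σ) ⊕ σ → K)}
    (hF : IsClosed F) : (secants C : Set ((σ ⊕ σ) ⊕ σ → K)) ⊆ F ↔
      ∀ p ∈ C, ∀ p' ∈ C, ∀ t : K, Sum.elim (Sum.elim p p') (t • (p' - p)) ∈ F := by
  refine ⟨fun h p hp p' hp' t => h (sumElim_smul_sub_mem_secants hp hp' t),
    fun h => (map_subset_iff _ hF).2 fun z hz => ?_⟩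
  have hz' := h _ hz.1.1 _ hz.1.2 (z (Sum.inr ()))
  rwa [Sum.elim_comp_inl_inr] at hz'

theorem sumElim_smul_mem_secants {C : IrreducibleCloseds (σ → K)} {x : σ ⊕ σ → K} {v : σ → K}
    (hv : Sum.elim x v ∈ secants C) (t : K) : Sum.elim x (t • v) ∈ secants C := by
  have hscale : Continuous fun z : (σ ⊕ σ) ⊕ σ → K => Sum.elim (z ∘ Sum.inl) (t • z ∘ Sum.inr) :=
    continuous_of_forall_isPolyFun <| Sum.rec (fun i => .coord (Sum.inl i))
      fun j => .mul (.const t) (.coord (Sum.inr j))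
  refine (secants_subset_iff ((secants C).isClosed.preimage hscale)).2
    (fun p hp p' hp' u => ?_) hv
  have hu := sumElim_smul_sub_mem_secants hp hp' (t * u)
  rwa [mul_smul] at hu

theorem height_secants_le (C : IrreducibleCloseds (σ → K)) :
    height (secants C) ≤ height C + height C + 1 := by
  refine (height_map_le_of_forall_isPolyFun isPolyFun_secantParam _).trans_eq ?_
  rw [height_prod, height_prod, height_top, Nat.card_unique, Nat.cast_one]

end Density

section Lines

variable {K : Type*} [Field K]

/-- The line `y = q₀ x + q₁` in the plane. -/
def line (q : Fin 2 → K) : Set (Fin 2 → K) :=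
  {p | p 1 = q 0 * p 0 + q 1}

variable [HasZariskiGeometry K] [RefinesZariski K]

/-- The lines whose point at infinity is a point at infinity of `C`. -/
def asymptoticLines (C : IrreducibleCloseds (Fin 2 → K)) : Set (Fin 2 → K) :=
  {q | Sum.elim ![1, q 0] 0 ∈ cone C}

/-- The lines through a point `x` in a direction which is a limit of directions of secants of `C`
at `x`. -/
def tangentLines (C : IrreducibleCloseds (Fin 2 → K)) : Set (Fin 2 → K) :=
  {q | ∃ x ∈ line q, Sum.elim (Sum.elim x x) ![1, q 0] ∈ secants C}

theorem not_dense_asymptoticLines {C : IrreducibleCloseds (Fin 2 → K)} (hC : height C = 1) :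
    ¬ Dense (asymptoticLines C) := by
  intro hdense
  let S : Set (Fin 2 ⊕ Unit → K) := cone C ∩ {z | z (Sum.inr ()) = 0}
  have hSC : S ⊂ cone C := by
    obtain ⟨p, hp⟩ := C.isIrreducible.nonempty
    exact ⟨inter_subset_left, fun h => one_ne_zero (h (sumElim_smul_mem_cone hp 1)).2⟩
  have hS : Dense ((· ∘ Sum.inl) '' S) := dense_of_forall_coord_ne_zero 0 fun v hv => by
    have hcont : Continuous fun q : Fin 2 → K => v 0 • ![1, q 0] :=
      continuous_of_forall_isPolyFun <| Fin.forall_fin_two.2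
        ⟨.mul (.const _) (.const 1), .mul (.const _) (.coord 0)⟩
    convert map_mem_closure hcont (hdense ![v 1 / v 0, 0]) (fun q hq => ?_) using 1
    · ext i
      fin_cases i <;> simp [mul_div_cancel₀ _ hv]
    · exact ⟨_, ⟨smul_mem_cone hq (v 0), by simp⟩, by ext; simp⟩
  have hlt := card_lt_height_of_dense_image ((cone C).isClosed.inter (isClosed_coord_eq _ _)) hSC
    (fun i => .coord (Sum.inl i)) hS
  have hle := height_cone_le C
  rw [hC] at hle
  simpa [one_add_one_eq_two] using hlt.trans_le hle

theorem not_dense_tangentLines {C : IrreducibleCloseds (Fin 2 → K)} (hC : height C = 1) :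
    ¬ Dense (tangentLines C) := by
  intro hdense
  let S : Set ((Fin 2 ⊕ Fin 2) ⊕ Fin 2 → K) :=
    secants C ∩ ⋂ i, {z | z (Sum.inl (Sum.inl i)) = z (Sum.inl (Sum.inr i))}
  have hSclosed : IsClosed S :=
    (secants C).isClosed.inter (isClosed_iInter fun i => isClosed_diagonal _ _)
  have hSC : S ⊂ secants C := by
    obtain ⟨p, hp, p', hp', hpp'⟩ := one_le_height_iff.1 hC.ge
    refine ⟨inter_subset_left, fun h => hpp' (funext fun i => ?_)⟩
    exact mem_iInter.1 (h (sumElim_smul_sub_mem_secants hp hp' 0)).2 i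
  let Ψ : ((Fin 2 ⊕ Fin 2) ⊕ Fin 2 → K) → Fin 3 → K := fun z =>
    ![z (Sum.inr 0), z (Sum.inr 1),
      z (Sum.inr 0) * z (Sum.inl (Sum.inl 1)) - z (Sum.inr 1) * z (Sum.inl (Sum.inl 0))]
  have hS : Dense (Ψ '' S) := dense_of_forall_coord_ne_zero 0 fun v hv => by
    have hcont : Continuous fun q : Fin 2 → K => v 0 • ![1, q 0, q 1] :=
      continuous_of_forall_isPolyFun fun i => .mul (.const _) <| by
        fin_cases i
        exacts [.const 1, .coord 0, .coord 1]
    convert map_mem_closure hcont (hdense ![v 1 / v 0, v 2 / v 0]) (fun q hq => ?_) using 1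
    · ext i
      fin_cases i <;> simp [mul_div_cancel₀ _ hv]
    · obtain ⟨x, hxq, hx⟩ := hq
      refine ⟨_, ⟨sumElim_smul_mem_secants hx (v 0), mem_iInter.2 fun _ => rfl⟩, ?_⟩
      have hxq : x 1 = q 0 * x 0 + q 1 := hxq
      ext i
      fin_cases i <;> simp [Ψ, hxq]
      ring
  have hlt := card_lt_height_of_dense_image hSclosed hSC
    (fun i => by
      fin_cases i
      exacts [.coord _, .coord _, .sub (.mul (.coord _) (.coord _)) (.mul (.coord _) (.coord _))])
    hS
  have hle := height_secants_le C
  rw [hC] at hle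
  norm_num at hlt hle
  exact hlt.not_ge hle

theorem isOpen_setOf_notMem_line (p : Fin 2 → K) : IsOpen {q | p ∉ line q} :=
  (isClosed_eq_of_isPolyFun (f := fun _ => p 1) (g := fun q => q 0 * p 0 + q 1)
    (by fun_prop) (by fun_prop)).isOpen_compl

theorem exists_mem_disjoint_line {W : Set (Fin 2 → K)} (hW : IsOpen W) (hne : W.Nonempty)
    {F : Set (Fin 2 → K)} (hF : F.Finite) : ∃ q ∈ W, Disjoint F (line q) := by
  induction F, hF using Set.Finite.induction_on generalizing W with
  | empty => exact hne.imp fun q hq => ⟨hq, empty_disjoint _⟩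
  | @insert p F _ _ ih =>
    have hdense : Dense {q | p ∉ line q} :=
      (isOpen_setOf_notMem_line p).dense ⟨![0, p 1 + 1], by simp [line]⟩
    obtain ⟨q, ⟨hqW, hpq⟩, hFq⟩ := ih (hW.inter (isOpen_setOf_notMem_line p))
      (hdense.inter_open_nonempty W hW hne)
    exact ⟨q, hqW, disjoint_insert_left.2 ⟨hpq, hFq⟩⟩

theorem exists_pairwise_disjoint_inter_line {C W : Set (Fin 2 → K)} (hW : IsOpen W)
    (hne : W.Nonempty) (hfin : ∀ q ∈ W, (C ∩ line q).Finite) :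
    ∃ q : ℕ → Fin 2 → K, (∀ k, q k ∈ W) ∧ Pairwise (Disjoint on fun k => C ∩ line (q k)) := by
  have : Std.Symm (Disjoint on fun q : Fin 2 → K => C ∩ line q) := ⟨fun _ _ h => h.symm⟩
  refine exists_seq_of_forall_finset_exists' (· ∈ W) (Disjoint on fun q => C ∩ line q)
    fun Q hQ => ?_
  obtain ⟨q, hqW, hq⟩ := exists_mem_disjoint_line hW hne
    (Q.finite_toSet.biUnion fun q hq => hfin q (hQ q hq))
  exact ⟨q, hqW, fun q' hq' => ((disjoint_iUnion₂_left.1 hq) q' hq').mono_right inter_subset_right⟩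

end Lines

/-! ### Degeneration of a curve along a pencil -/

section PolynomialIdentities

variable {K : Type*} [Field K] {σ : Type*}

theorem exists_homogenization {f : MvPolynomial σ K} {d : ℕ} (hd : f.totalDegree ≤ d) :
    ∃ F : (σ ⊕ Unit → K) → K, IsPolyFun F ∧ ∀ (p : σ → K) (t : K),
      F (Sum.elim (t • p) fun _ => t) = t ^ d * MvPolynomial.eval p f := by
  let F : MvPolynomial (σ ⊕ Unit) K := ∑ e ∈ f.support, MvPolynomial.C (f.coeff e) *
    (e.prod fun i n => MvPolynomial.X (Sum.inl i) ^ n) *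
      MvPolynomial.X (Sum.inr ()) ^ (d - e.sum fun _ n => n)
  refine ⟨fun v => MvPolynomial.eval v F, ⟨F, fun _ => rfl⟩, fun p t => ?_⟩
  simp only [F, map_sum]
  rw [MvPolynomial.eval_eq, Finset.mul_sum]
  refine Finset.sum_congr rfl fun e he => ?_
  have hdeg : (e.sum fun _ n => n) ≤ d := (MvPolynomial.le_totalDegree he).trans hd
  simp only [Finsupp.prod, map_mul, map_prod, map_pow, MvPolynomial.eval_C, MvPolynomial.eval_X,
    Sum.elim_inl, Sum.elim_inr, Pi.smul_apply, smul_eq_mul, mul_pow, Finset.prod_mul_distrib,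
    Finset.prod_pow_eq_pow_sum]
  rw [← Nat.add_sub_of_le hdeg, pow_add, Finsupp.sum, Nat.add_sub_cancel_left]
  ring

theorem exists_divided_difference [Fintype σ] (f : MvPolynomial σ K) :
    ∃ Q : σ → (σ ⊕ σ → K) → K, (∀ i, IsPolyFun (Q i)) ∧
      (∀ p p' : σ → K, MvPolynomial.eval p' f - MvPolynomial.eval p f =
        ∑ i, (p' i - p i) * Q i (Sum.elim p p')) ∧
      ∀ i p, Q i (Sum.elim p p) = MvPolynomial.eval p (MvPolynomial.pderiv i f) := by
  classical
  induction f using MvPolynomial.induction_on with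
  | C a => exact ⟨fun _ _ => 0, fun _ => .const 0, by simp, by simp⟩
  | add f g hf hg =>
    obtain ⟨Q, hQ, hQf, hQd⟩ := hf
    obtain ⟨R, hR, hRg, hRd⟩ := hg
    refine ⟨fun i x => Q i x + R i x, fun i => (hQ i).add (hR i), fun p p' => ?_,
      by simp [hQd, hRd]⟩
    simp only [map_add, mul_add, Finset.sum_add_distrib, ← hQf, ← hRg]
    ring
  | mul_X f j hf =>
    obtain ⟨Q, hQ, hQf, hQd⟩ := hf
    refine ⟨fun i x => x (Sum.inr j) * Q i x +
      MvPolynomial.eval (x ∘ Sum.inl) f * (Pi.single j 1 : σ → K) i, fun i => ?_, fun p p' => ?_,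
      fun i p => ?_⟩
    · exact ((IsPolyFun.coord _).mul (hQ i)).add
        ((IsPolyFun.eval f fun i => .coord (Sum.inl i)).mul (.const _))
    · have hsum : ∑ i, (p' i - p i) * (p' j * Q i (Sum.elim p p')) =
          p' j * (MvPolynomial.eval p' f - MvPolynomial.eval p f) := by
        rw [hQf, Finset.mul_sum]
        exact Finset.sum_congr rfl fun i _ => by ring
      simp only [mul_add, Finset.sum_add_distrib, Sum.elim_inr, Sum.elim_comp_inl, hsum]
      simp [Pi.single_apply]
      ring
    · rcases eq_or_ne i j with rfl | hij
      · simp [hQd, add_comm]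
      · simp [hQd, hij, MvPolynomial.pderiv_X_of_ne hij.symm]

end PolynomialIdentities

section Pencils

variable {K : Type*} [Field K] {σ : Type*}

/-- The points of `C` on the member `(1 - s) f + s g = 0` of the pencil spanned by `f` and `g`. -/
def pencilInter (C : Set (σ → K)) (f g : MvPolynomial σ K) (s : K) : Set (σ → K) :=
  {p ∈ C | (1 - s) * MvPolynomial.eval p f + s * MvPolynomial.eval p g = 0}

/-- Homogeneous coordinates of the points of `C` on the members of a pencil, together with the
parameter of the member. -/
def pencilCone (C : Set (σ → K)) (f g : MvPolynomial σ K) : Set (Unit ⊕ (σ ⊕ Unit) → K) :=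
  {z | ∃ s t : K, ∃ p ∈ pencilInter C f g s,
    z = Sum.elim (fun _ => s) (Sum.elim (t • p) fun _ => t)}

/-- Pairs of points of `C` on the same member of a pencil with a multiple of their difference,
together with the parameter of the member. -/
def pencilSecants (C : Set (σ → K)) (f g : MvPolynomial σ K) : Set (Unit ⊕ (σ ⊕ σ) ⊕ σ → K) :=
  {z | ∃ s u : K, ∃ p ∈ pencilInter C f g s, ∃ p' ∈ pencilInter C f g s,
    z = Sum.elim (fun _ => s) (Sum.elim (Sum.elim p p') (u • (p' - p)))}

/-- The coordinates of the points `p i`, followed by those of the point at infinity on the line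
through `p i` and `p j`, for every pair `i ≠ j`. -/
def chordVectors {ι : Type*} (p : ι → σ → K) :
    ι ⊕ {ij : ι × ι // ij.1 ≠ ij.2} → σ ⊕ Unit → K
  | .inl i => Sum.elim (p i) 1
  | .inr ij => Sum.elim (p ij.1.2 - p ij.1.1) 0

/-- The chord vectors, each up to a scalar, of the families of points of `C` on the same member of a
pencil, together with the parameter of the member. -/
def pencilFamilies (ι : Type*) (C : Set (σ → K)) (f g : MvPolynomial σ K) :
    Set (Unit ⊕ (ι ⊕ {ij : ι × ι // ij.1 ≠ ij.2}) × (σ ⊕ Unit) → K) :=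
  {z | ∃ s : K, ∃ p : ι → σ → K, (∀ i, p i ∈ pencilInter C f g s) ∧
    ∃ t : ι ⊕ {ij : ι × ι // ij.1 ≠ ij.2} → K,
      z = Sum.elim (fun _ => s) (uncurry fun a => t a • chordVectors p a)}

/-- The point of affine space with homogeneous coordinates `v`, provided that the last coordinate
does not vanish. -/
def dehomogenize (v : σ ⊕ Unit → K) : σ → K :=
  fun i => v (Sum.inl i) / v (Sum.inr ())

variable [HasZariskiGeometry K] [Finite σ] {ι : Type*} [Finite ι] {f g : MvPolynomial σ K}

section Limits

variable {C : Set (σ → K)} {V : ι ⊕ {ij : ι × ι // ij.1 ≠ ij.2} → σ ⊕ Unit → K} {s : K}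

theorem mem_closure_pencilCone_of_pencilFamilies
    (hV : Sum.elim (fun _ => s) (uncurry V) ∈ closure (pencilFamilies ι C f g))
    (i : ι) : Sum.elim (fun _ => s) (V (Sum.inl i)) ∈ closure (pencilCone C f g) := by
  have hcont := continuous_comp_right (X := K)
    (Sum.map id fun k : σ ⊕ Unit => ((Sum.inl i : ι ⊕ {ij : ι × ι // ij.1 ≠ ij.2}), k) :
      Unit ⊕ (σ ⊕ Unit) → _)
  convert map_mem_closure hcont hV ?_ using 1
  · ext (_ | _) <;> rfl
  · rintro _ ⟨s, p, hp, t, rfl⟩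
    refine ⟨s, t (Sum.inl i), p i, hp i, ?_⟩
    ext (_ | _ | _) <;> simp [chordVectors, uncurry]

theorem chord_last_eq_zero_of_mem_closure_pencilFamilies
    (hV : Sum.elim (fun _ => s) (uncurry V) ∈ closure (pencilFamilies ι C f g))
    (ij : {ij : ι × ι // ij.1 ≠ ij.2}) : V (Sum.inr ij) (Sum.inr ()) = 0 := by
  refine closure_minimal ?_ (isClosed_coord_eq (Sum.inr (Sum.inr ij, Sum.inr ())) 0) hV
  rintro _ ⟨s, p, -, t, rfl⟩
  simp [chordVectors, uncurry]

variable [RefinesZariski K]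

theorem mem_closure_pencilSecants_of_pencilFamilies
    (hV : Sum.elim (fun _ => s) (uncurry V) ∈ closure (pencilFamilies ι C f g))
    {i j : ι} (hij : i ≠ j) (hi : V (Sum.inl i) (Sum.inr ()) ≠ 0)
    (hj : V (Sum.inl j) (Sum.inr ()) ≠ 0) :
    Sum.elim (fun _ => s) (Sum.elim (Sum.elim (dehomogenize (V (Sum.inl i)))
      (dehomogenize (V (Sum.inl j)))) (V (Sum.inr ⟨(i, j), hij⟩) ∘ Sum.inl)) ∈
        closure (pencilSecants C f g) := by
  let Φ : (Unit ⊕ (ι ⊕ {ij : ι × ι // ij.1 ≠ ij.2}) × (σ ⊕ Unit) → K) → Unit ⊕ (σ ⊕ σ) ⊕ σ → K :=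
    fun z =>
      let tᵢ := z (Sum.inr (Sum.inl i, Sum.inr ()))
      let tⱼ := z (Sum.inr (Sum.inl j, Sum.inr ()))
      Sum.elim (fun _ => tᵢ * tⱼ * z (Sum.inl ())) (Sum.elim (Sum.elim
        (fun k => tⱼ * z (Sum.inr (Sum.inl i, Sum.inl k)))
        (fun k => tᵢ * z (Sum.inr (Sum.inl j, Sum.inl k))))
        (fun k => tᵢ * tⱼ * z (Sum.inr (Sum.inr ⟨(i, j), hij⟩, Sum.inl k))))
  have hΦ : ∀ k, IsPolyFun fun z => Φ z k := by
    rintro (_ | (_ | _) | _) <;> simp only [Φ, Sum.elim_inl, Sum.elim_inr] <;> fun_prop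
  have hprod : IsPolyFun fun z : Unit ⊕ (ι ⊕ {ij : ι × ι // ij.1 ≠ ij.2}) × (σ ⊕ Unit) → K =>
    z (Sum.inr (Sum.inl i, Sum.inr ())) * z (Sum.inr (Sum.inl j, Sum.inr ())) := by fun_prop
  convert div_mem_closure hΦ hprod ?_ hV (mul_ne_zero hi hj) using 1
  · ext (_ | (_ | _) | _) <;> simp [Φ, dehomogenize] <;> field_simp
  · rintro _ ⟨s, p, hp, t, rfl⟩ ht
    refine ⟨s, t (Sum.inr ⟨(i, j), hij⟩), p i, hp i, p j, hp j, ?_⟩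
    obtain ⟨hti, htj⟩ : t (Sum.inl i) ≠ 0 ∧ t (Sum.inl j) ≠ 0 := by
      simpa [uncurry, chordVectors] using ht
    ext (_ | (_ | _) | _) <;> simp [Φ, uncurry, chordVectors] <;> field_simp

end Limits

variable [RefinesZariski K] {C : IrreducibleCloseds (σ → K)}

theorem exists_irreducibleCloseds_pencilInter (hC : height C = 1)
    (hfin : ((C : Set (σ → K)) ∩ {p | MvPolynomial.eval p f = 0}).Finite) {P : ι → σ → K}
    (hP : ∀ i, P i ∈ (C : Set (σ → K)) ∩ {p | MvPolynomial.eval p f = 0}) :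
    ∃ J : IrreducibleCloseds (Unit ⊕ ι × σ → K), Sum.elim (fun _ => 0) (uncurry P) ∈ J ∧
      (∀ x ∈ J, ∀ i, (fun j => x (Sum.inr (i, j))) ∈ pencilInter C f g (x (Sum.inl ()))) ∧
      ((fun x => x (Sum.inl ())) '' (J : Set (Unit ⊕ ι × σ → K))).Nontrivial := by
  have := Fintype.ofFinite ι
  obtain ⟨A, hA, hAdim⟩ := exists_pi fun _ : ι => C
  have hpoly (i : ι) : IsPolyFun fun x : Unit ⊕ ι × σ → K =>
      (1 - x (Sum.inl ())) * MvPolynomial.eval (fun j => x (Sum.inr (i, j))) f +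
        x (Sum.inl ()) * MvPolynomial.eval (fun j => x (Sum.inr (i, j))) g :=
    .add (.mul (by fun_prop) (.eval f fun _ => .coord _))
      (.mul (by fun_prop) (.eval g fun _ => .coord _))
  obtain ⟨J, hPJ, hJA, hJ, hdim⟩ := IsSlicing.exists_forall_subset
    (fun i => isSlicing_zeros (hpoly i)) (U := prod ⊤ A) (A := {Sum.elim (fun _ => 0) (uncurry P)})
    (singleton_subset_iff.2 ⟨mem_top_irreducibleCloseds _, (hA _).2 fun i => (hP i).1⟩)
    (fun i => singleton_subset_iff.2 (by simpa using (hP i).2))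
  have hPJ : Sum.elim (fun _ => 0) (uncurry P) ∈ J := hPJ rfl
  have hJmem : ∀ x ∈ J, ∀ i, (fun j => x (Sum.inr (i, j))) ∈ pencilInter C f g (x (Sum.inl ())) :=
    fun x hx i => ⟨(hA _).1 (hJA hx).2 i, hJ i hx⟩
  refine ⟨J, hPJ, hJmem, not_subsingleton_iff.1 fun hss => ?_⟩
  have hJzero : ∀ x ∈ J, x (Sum.inl ()) = 0 := fun x hx => hss ⟨x, hx, rfl⟩ ⟨_, hPJ, rfl⟩
  have hJfin : (J : Set (Unit ⊕ ι × σ → K)).Finite := by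
    refine Finite.of_injOn (f := fun x i j => x (Sum.inr (i, j)))
      (fun x hx => mem_univ_pi.2 fun i => ?_) (fun x hx y hy hxy => funext ?_)
      (Finite.pi fun _ : ι => hfin)
    · have hi := hJmem x hx i
      rw [hJzero x hx] at hi
      exact ⟨hi.1, by simpa using hi.2⟩
    · rintro (_ | ⟨i, j⟩)
      exacts [(hJzero x hx).trans (hJzero y hy).symm, congrFun₂ hxy i j]
  have hJdim : 1 ≤ height J := by
    rw [height_prod, height_top, hAdim] at hdim
    simpa [hC, ENat.add_le_add_iff_right] using hdim
  exact (one_le_height_iff.1 hJdim).not_subsingleton (subsingleton_of_finite J.isIrreducible hJfin)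

theorem exists_forall_ne_zero_mem_closure_pencilFamilies (hC : height C = 1)
    (hfin : ((C : Set (σ → K)) ∩ {p | MvPolynomial.eval p f = 0}).Finite) {P : ι → σ → K}
    (hP : ∀ i, P i ∈ (C : Set (σ → K)) ∩ {p | MvPolynomial.eval p f = 0})
    (hinj : Injective P) (s₀ : K) :
    ∃ V : ι ⊕ {ij : ι × ι // ij.1 ≠ ij.2} → σ ⊕ Unit → K, (∀ a, V a ≠ 0) ∧
      Sum.elim (fun _ => s₀) (uncurry V) ∈ closure (pencilFamilies ι (C : Set (σ → K)) f g) := by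
  obtain ⟨J, hPJ, hJ, hnt⟩ := exists_irreducibleCloseds_pencilInter (g := g) hC hfin hP
  have hne : ∀ a, chordVectors P a ≠ 0 := by
    rintro (i | ⟨⟨i, j⟩, hij⟩) h
    · exact one_ne_zero (congrFun h (Sum.inr ()))
    · exact hij (hinj (funext fun k => (sub_eq_zero.1 (congrFun h (Sum.inl k))).symm))
  obtain ⟨V, hV, hVJ⟩ := exists_forall_ne_zero_mem_closure_smul (.coord _) hnt
    (φ := fun a x => chordVectors (fun i j => x (Sum.inr (i, j))) a)
    (by
      rintro (_ | _) (_ | _)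
      exacts [.coord _, .const 1, .sub (.coord _) (.coord _), .const 0])
    ⟨_, hPJ, hne⟩ s₀
  refine ⟨V, hV, closure_mono ?_ hVJ⟩
  rintro _ ⟨x, hx, t, rfl⟩
  exact ⟨_, _, hJ x hx, t, rfl⟩

end Pencils

section PencilLimits

variable {K : Type*} [Field K] [HasZariskiGeometry K] [RefinesZariski K] {σ : Type*}

section

variable [Finite σ] {C : IrreducibleCloseds (σ → K)} {f g : MvPolynomial σ K}

theorem mem_cone_of_mem_closure_pencilCone {s : K} {v : σ ⊕ Unit → K}
    (hv : Sum.elim (fun _ => s) v ∈ closure (pencilCone (C : Set (σ → K)) f g)) : v ∈ cone C := by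
  refine closure_minimal ?_ ((cone C).isClosed.preimage (continuous_comp_right Sum.inr)) hv
  rintro _ ⟨s, t, p, hp, rfl⟩
  exact sumElim_smul_mem_cone hp.1 t

theorem mem_secants_of_mem_closure_pencilSecants {s : K} {x : (σ ⊕ σ) ⊕ σ → K}
    (hx : Sum.elim (fun _ => s) x ∈ closure (pencilSecants (C : Set (σ → K)) f g)) :
    x ∈ secants C := by
  refine closure_minimal ?_ ((secants C).isClosed.preimage (continuous_comp_right Sum.inr)) hx
  rintro _ ⟨s, u, p, hp, p', hp', rfl⟩
  exact sumElim_smul_sub_mem_secants hp.1 hp'.1 u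

theorem dehomogenize_mem_of_mem_cone {v : σ ⊕ Unit → K} (hv : v ∈ cone C)
    (hv₀ : v (Sum.inr ()) ≠ 0) : dehomogenize v ∈ C := by
  refine C.isClosed.closure_subset (div_mem_closure
    (fun i => .coord (Sum.inl i)) (.coord (Sum.inr ())) ?_ hv hv₀)
  rintro _ ⟨z, ⟨hz, -⟩, rfl⟩ hz₀
  have hdiv : (fun i => coneParam z (Sum.inl i) / coneParam z (Sum.inr ())) = z ∘ Sum.inl :=
    funext fun i => mul_div_cancel_left₀ _ hz₀
  exact hdiv ▸ hz

end

variable {C : Set (σ → K)} {f g : MvPolynomial σ K}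

theorem eq_zero_of_mem_closure_pencilCone [Finite σ] {d : ℕ} (hd : f.totalDegree ≤ d)
    {G : (σ ⊕ Unit → K) → K} (hG : IsPolyFun G)
    (hGg : ∀ (p : σ → K) (t : K), G (Sum.elim (t • p) fun _ => t) = t ^ d * MvPolynomial.eval p g)
    {v : σ ⊕ Unit → K} (hv : Sum.elim (fun _ => 1) v ∈ closure (pencilCone C f g)) : G v = 0 := by
  obtain ⟨F, hF, hFf⟩ := exists_homogenization hd
  have hpoly : IsPolyFun fun z : Unit ⊕ (σ ⊕ Unit) → K =>
      (1 - z (Sum.inl ())) * F (z ∘ Sum.inr) + z (Sum.inl ()) * G (z ∘ Sum.inr) :=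
    .add (.mul (by fun_prop) (hF.comp fun _ => .coord _))
      (.mul (by fun_prop) (hG.comp fun _ => .coord _))
  have hzero := closure_minimal (s := pencilCone C f g) ?_ (isClosed_zeros hpoly) hv
  · simpa using hzero
  · rintro _ ⟨s, t, p, ⟨-, hp⟩, rfl⟩
    simp only [mem_ofPred_eq, Sum.elim_inl, Sum.elim_comp_inr, hFf, hGg]
    linear_combination t ^ d * hp

theorem sum_mul_pderiv_eq_zero_of_mem_closure_pencilSecants [Fintype σ] {p w : σ → K}
    (h : Sum.elim (fun _ => 1) (Sum.elim (Sum.elim p p) w) ∈ closure (pencilSecants C f g)) :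
    ∑ i, w i * MvPolynomial.eval p (MvPolynomial.pderiv i g) = 0 := by
  obtain ⟨Q, hQ, hQf, -⟩ := exists_divided_difference f
  obtain ⟨R, hR, hRg, hRd⟩ := exists_divided_difference g
  have hpoly (i : σ) : IsPolyFun fun z : Unit ⊕ (σ ⊕ σ) ⊕ σ → K => z (Sum.inr (Sum.inr i)) *
      ((1 - z (Sum.inl ())) * Q i (z ∘ Sum.inr ∘ Sum.inl) +
        z (Sum.inl ()) * R i (z ∘ Sum.inr ∘ Sum.inl)) :=
    .mul (.coord _) (.add (.mul (by fun_prop) ((hQ i).comp fun _ => .coord _))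
      (.mul (by fun_prop) ((hR i).comp fun _ => .coord _)))
  have hzero := closure_minimal (s := pencilSecants C f g) ?_
    (isClosed_zeros (.sum Finset.univ hpoly)) h
  · simpa [← comp_assoc, hRd] using hzero
  · rintro _ ⟨s, u, p, ⟨-, hp⟩, p', ⟨-, hp'⟩, rfl⟩
    calc ∑ i, u * (p' i - p i) * ((1 - s) * Q i (Sum.elim p p') + s * R i (Sum.elim p p'))
        = u * ((1 - s) * ∑ i, (p' i - p i) * Q i (Sum.elim p p') +
            s * ∑ i, (p' i - p i) * R i (Sum.elim p p')) := by
          simp only [Finset.mul_sum, ← Finset.sum_add_distrib]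
          exact Finset.sum_congr rfl fun i _ => by ring
      _ = 0 := by
          rw [← hQf, ← hRg]
          linear_combination u * (hp' - hp)

end PencilLimits

section DegenerationToLines

variable {K : Type*} [Field K]

/-- The equation of the line `line q`. -/
noncomputable def linePoly (q : Fin 2 → K) : MvPolynomial (Fin 2) K :=
  .X 1 - .C (q 0) * .X 0 - .C (q 1)

theorem mem_line_iff {p q : Fin 2 → K} : p ∈ line q ↔ MvPolynomial.eval p (linePoly q) = 0 := by
  simp [line, linePoly, sub_sub, sub_eq_zero]

theorem sum_mul_pderiv_linePoly (p q w : Fin 2 → K) :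
    ∑ i, w i * MvPolynomial.eval p (MvPolynomial.pderiv i (linePoly q)) = w 1 - q 0 * w 0 := by
  simp [linePoly, MvPolynomial.pderiv_X]
  ring

variable [HasZariskiGeometry K] [RefinesZariski K] {C : IrreducibleCloseds (Fin 2 → K)}
  {f : MvPolynomial (Fin 2) K} {d : ℕ} {q : ℕ → Fin 2 → K}

theorem exists_lt_eq_of_mem_closure_pencilCone (hd : f.totalDegree ≤ d) {v : Fin 2 ⊕ Unit → K}
    (hv : Sum.elim (fun _ => 1) v ∈
      closure (pencilCone (C : Set (Fin 2 → K)) f (∏ k ∈ Finset.range d, linePoly (q k)))) :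
    ∃ k < d, v (Sum.inl 1) = q k 0 * v (Sum.inl 0) + q k 1 * v (Sum.inr ()) := by
  let G : (Fin 2 ⊕ Unit → K) → K := fun v =>
    ∏ k ∈ Finset.range d, (v (Sum.inl 1) - q k 0 * v (Sum.inl 0) - q k 1 * v (Sum.inr ()))
  have hG : IsPolyFun G := .prod _ fun k => by fun_prop
  have hGv : G v = 0 := eq_zero_of_mem_closure_pencilCone hd hG (fun p t => ?_) hv
  · obtain ⟨k, hk, hkv⟩ := Finset.prod_eq_zero_iff.1 hGv
    exact ⟨k, Finset.mem_range.1 hk, by linear_combination hkv⟩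
  · have hpow : t ^ d = ∏ _k ∈ Finset.range d, t := by simp
    rw [map_prod, hpow, ← Finset.prod_mul_distrib]
    refine Finset.prod_congr rfl fun k _ => ?_
    simp [linePoly]
    ring

theorem exists_lt_dehomogenize_mem_line (hd : f.totalDegree ≤ d)
    (hq : ∀ k, q k ∉ asymptoticLines C) {v : Fin 2 ⊕ Unit → K} (hv₀ : v ≠ 0)
    (hv : Sum.elim (fun _ => 1) v ∈
      closure (pencilCone (C : Set (Fin 2 → K)) f (∏ k ∈ Finset.range d, linePoly (q k)))) :
    v (Sum.inr ()) ≠ 0 ∧ ∃ k < d, dehomogenize v ∈ (C : Set (Fin 2 → K)) ∩ line (q k) := by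
  have hcone := mem_cone_of_mem_closure_pencilCone hv
  obtain ⟨k, hk, hkv⟩ := exists_lt_eq_of_mem_closure_pencilCone hd hv
  have hlast : v (Sum.inr ()) ≠ 0 := fun hlast => by
    rw [hlast, mul_zero, add_zero] at hkv
    have hfirst : v (Sum.inl 0) ≠ 0 := fun hfirst => hv₀ <| by
      ext (i | _)
      · fin_cases i <;> simp [hfirst, hkv]
      · exact hlast
    have hscale : (v (Sum.inl 0))⁻¹ • v = Sum.elim ![1, q k 0] 0 := by
      ext (i | _)
      · fin_cases i <;> simp [hfirst, hkv, mul_comm]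
      · simp [hlast]
    exact hq k (show _ ∈ cone _ from hscale ▸ smul_mem_cone hcone (v (Sum.inl 0))⁻¹)
  refine ⟨hlast, k, hk, dehomogenize_mem_of_mem_cone hcone hlast, ?_⟩
  change v (Sum.inl 1) / _ = q k 0 * (v (Sum.inl 0) / _) + q k 1
  rw [hkv]
  field_simp

theorem eq_zero_of_mem_closure_pencilSecants (hq : ∀ k, q k ∉ tangentLines C)
    (hdisj : Pairwise (Disjoint on fun k => (C : Set (Fin 2 → K)) ∩ line (q k)))
    {p w : Fin 2 → K} {k : ℕ} (hk : k < d) (hp : p ∈ (C : Set (Fin 2 → K)) ∩ line (q k))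
    (h : Sum.elim (fun _ => 1) (Sum.elim (Sum.elim p p) w) ∈
      closure (pencilSecants (C : Set (Fin 2 → K)) f (∏ k ∈ Finset.range d, linePoly (q k)))) :
    w = 0 := by
  have hslope : w 1 = q k 0 * w 0 := by
    have hrest : MvPolynomial.eval p (∏ k' ∈ (Finset.range d).erase k, linePoly (q k')) ≠ 0 := by
      rw [map_prod]
      refine Finset.prod_ne_zero_iff.2 fun k' hk' hpk' => ?_
      exact (hdisj (Finset.ne_of_mem_erase hk')).ne_of_mem ⟨hp.1, mem_line_iff.2 hpk'⟩ hp rfl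
    have hsum := sum_mul_pderiv_eq_zero_of_mem_closure_pencilSecants h
    rw [← Finset.mul_prod_erase _ _ (Finset.mem_range.2 hk)] at hsum
    simp only [Derivation.leibniz, smul_eq_mul, map_add, map_mul, mem_line_iff.1 hp.2, zero_mul,
      zero_add, mul_left_comm _ (MvPolynomial.eval p _), ← Finset.mul_sum,
      sum_mul_pderiv_linePoly] at hsum
    exact sub_eq_zero.1 ((mul_eq_zero.1 hsum).resolve_left hrest)
  by_contra hw
  have hw₀ : w 0 ≠ 0 := fun hw₀ => hw <| by
    ext i
    fin_cases i <;> simp [hw₀, hslope]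
  refine hq k ⟨p, hp.2, ?_⟩
  convert sumElim_smul_mem_secants (mem_secants_of_mem_closure_pencilSecants h) (w 0)⁻¹ using 2
  ext i
  fin_cases i <;> simp [hw₀, hslope, mul_comm]

end DegenerationToLines

section Bezout

variable {K : Type*} [Field K] [HasZariskiGeometry K] [RefinesZariski K]
  {C : IrreducibleCloseds (Fin 2 → K)}

theorem exists_lines_in_general_position (hC : height C = 1) {U : Set (Fin 2 → K)} (hU : IsOpen U)
    (hne : U.Nonempty) (hfin : ∀ q ∈ U, ((C : Set (Fin 2 → K)) ∩ line q).Finite) :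
    ∃ q : ℕ → Fin 2 → K, (∀ k, q k ∈ U) ∧ (∀ k, q k ∉ asymptoticLines C) ∧
      (∀ k, q k ∉ tangentLines C) ∧
      Pairwise (Disjoint on fun k => (C : Set (Fin 2 → K)) ∩ line (q k)) := by
  have hgeneric {A : Set (Fin 2 → K)} (hA : ¬ Dense A) : Dense (closure A)ᶜ :=
    isClosed_closure.isOpen_compl.dense (nonempty_compl.2 (mt dense_iff_closure_eq.2 hA))
  let W := (closure (asymptoticLines C))ᶜ ∩ (closure (tangentLines C))ᶜ
  have hW : IsOpen W := isClosed_closure.isOpen_compl.inter isClosed_closure.isOpen_compl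
  have hWdense : Dense W := (hgeneric (not_dense_asymptoticLines hC)).inter_of_isOpen_left
    (hgeneric (not_dense_tangentLines hC)) isClosed_closure.isOpen_compl
  obtain ⟨q, hq, hdisj⟩ := exists_pairwise_disjoint_inter_line (hU.inter hW)
    (hWdense.inter_open_nonempty U hU hne) fun q hq => hfin q hq.1
  exact ⟨q, fun k => (hq k).1, fun k h => (hq k).2.1 (subset_closure h),
    fun k h => (hq k).2.2 (subset_closure h), hdisj⟩

theorem ncard_inter_zeros_le_ncard_iUnion_lines (hC : height C = 1) {f : MvPolynomial (Fin 2) K}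
    {d : ℕ} (hd : f.totalDegree ≤ d)
    (hfin : ((C : Set (Fin 2 → K)) ∩ {p | MvPolynomial.eval p f = 0}).Finite) {q : ℕ → Fin 2 → K}
    (hasym : ∀ k, q k ∉ asymptoticLines C) (htan : ∀ k, q k ∉ tangentLines C)
    (hdisj : Pairwise (Disjoint on fun k => (C : Set (Fin 2 → K)) ∩ line (q k)))
    (hlines : ∀ k, ((C : Set (Fin 2 → K)) ∩ line (q k)).Finite) :
    ((C : Set (Fin 2 → K)) ∩ {p | MvPolynomial.eval p f = 0}).ncard ≤
      (⋃ k ∈ Finset.range d, (C : Set (Fin 2 → K)) ∩ line (q k)).ncard := by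
  have := hfin.to_subtype
  have := ((Finset.range d).finite_toSet.biUnion fun k _ => hlines k).to_subtype
  obtain ⟨V, hV₀, hV⟩ := exists_forall_ne_zero_mem_closure_pencilFamilies
    (g := ∏ k ∈ Finset.range d, linePoly (q k)) hC hfin Subtype.prop Subtype.val_injective 1
  choose hlast k hkd hk using fun i => exists_lt_dehomogenize_mem_line hd hasym (hV₀ (Sum.inl i))
    (mem_closure_pencilCone_of_pencilFamilies hV i)
  rw [← Nat.card_coe_set_eq, ← Nat.card_coe_set_eq]
  refine Nat.card_le_card_of_injective (fun i => ⟨dehomogenize (V (Sum.inl i)),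
    mem_biUnion (Finset.mem_range.2 (hkd i)) (hk i)⟩) fun i j hij => ?_
  by_contra hne
  have hcollide : dehomogenize (V (Sum.inl i)) = dehomogenize (V (Sum.inl j)) :=
    congrArg Subtype.val hij
  have hsecant := mem_closure_pencilSecants_of_pencilFamilies hV hne (hlast i) (hlast j)
  rw [← hcollide] at hsecant
  have hchord := eq_zero_of_mem_closure_pencilSecants htan hdisj (hkd i) (hk i) hsecant
  refine hV₀ (Sum.inr ⟨(i, j), hne⟩) (funext (Sum.rec (congrFun hchord) fun _ => ?_))
  exact chord_last_eq_zero_of_mem_closure_pencilFamilies hV _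

end Bezout

end ZariskiGeometry


theorem plane_curve_bezout_bound_general
    {K : Type*} [Field K] (Z : ZariskiGeometry K)
    (hrefine : ∀ (n : ℕ) (C : Set (Fin n → K)), ZariskiClosedSet K C → IsClosed[Z.τ n] C)
    (C : Set (Fin 2 → K)) (hCcl : IsClosed[Z.τ 2] C)
    (hCirr : @IsIrreducible _ (Z.τ 2) C)
    (hCdim : setKrullDim (Z.τ 2) C = 1)
    (m : ℕ) (U : Set (Fin 2 → K)) (hUne : U.Nonempty)
    (hUopen : IsOpen[Z.τ 2] U)
    (hdeg : ∀ q ∈ U,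
      (C ∩ {p : Fin 2 → K | p 1 = q 0 * p 0 + q 1}).Finite ∧
      (C ∩ {p : Fin 2 → K | p 1 = q 0 * p 0 + q 1}).ncard = m)
    (f : MvPolynomial (Fin 2) K)
    (hfin : (C ∩ {p : Fin 2 → K | MvPolynomial.eval p f = 0}).Finite) :
    (C ∩ {p : Fin 2 → K | MvPolynomial.eval p f = 0}).ncard ≤ f.totalDegree * m := by
  let _ : ZariskiGeometry.HasZariskiGeometry K := ⟨Z⟩
  have : ZariskiGeometry.RefinesZariski K := ⟨hrefine⟩
  have htop : Z.τ 2 = ZariskiGeometry.powerTopology := (ZariskiGeometry.powerTopology_fin 2).symm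
  rw [htop] at hCcl hCirr hCdim hUopen
  lift C to TopologicalSpace.IrreducibleCloseds (Fin 2 → K) using ⟨hCirr, hCcl⟩
  have hC : Order.height C = 1 := by
    rw [ZariskiGeometry.setKrullDim_eq_height] at hCdim
    exact_mod_cast hCdim
  obtain ⟨q, hqU, hasym, htan, hdisj⟩ :=
    ZariskiGeometry.exists_lines_in_general_position hC hUopen hUne fun q hq => (hdeg q hq).1
  calc _ ≤ (⋃ k ∈ Finset.range f.totalDegree, C ∩ ZariskiGeometry.line (q k)).ncard :=
        ZariskiGeometry.ncard_inter_zeros_le_ncard_iUnion_lines hC le_rfl hfin hasym htan hdisj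
          fun k => (hdeg _ (hqU k)).1
    _ ≤ ∑ k ∈ Finset.range f.totalDegree,
          ((C : Set (Fin 2 → K)) ∩ ZariskiGeometry.line (q k)).ncard :=
        Finset.set_ncard_biUnion_le _ _
    _ = f.totalDegree * m :=
        (Finset.sum_const_nat fun k _ => (hdeg _ (hqU k)).2).trans (by rw [Finset.card_range])

/-- The Bezout-type bound of Theorem 3: if `C` is a plane curve of a Zariski geometry
refining the Zariski topology on an algebraically closed field, of degree `m` (a generic
line `y = a·x + b` meets `C` in exactly `m` points), and `f ∈ K[X,Y]` is a nonzero
polynomial of total degree `d`, then a finite intersection of `C` with the zero set of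
`f` has at most `d * m` points. -/
theorem plane_curve_bezout_bound
    {K : Type*} [Field K] [IsAlgClosed K] (Z : ZariskiGeometry K)
    (hrefine : ∀ (n : ℕ) (C : Set (Fin n → K)), ZariskiClosedSet K C → IsClosed[Z.τ n] C)
    (C : Set (Fin 2 → K)) (hCcl : IsClosed[Z.τ 2] C)
    (hCirr : @IsIrreducible _ (Z.τ 2) C)
    (hCdim : setKrullDim (Z.τ 2) C = 1)
    (m : ℕ) (U : Set (Fin 2 → K)) (hUne : U.Nonempty)
    (hUopen : IsOpen[zariskiTopology K 2] U)
    (hdeg : ∀ q ∈ U,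
      (C ∩ {p : Fin 2 → K | p 1 = q 0 * p 0 + q 1}).Finite ∧
      (C ∩ {p : Fin 2 → K | p 1 = q 0 * p 0 + q 1}).ncard = m)
    (f : MvPolynomial (Fin 2) K) (hf : f ≠ 0) (d : ℕ) (hd : f.totalDegree = d)
    (hfin : (C ∩ {p : Fin 2 → K | MvPolynomial.eval p f = 0}).Finite) :
    (C ∩ {p : Fin 2 → K | MvPolynomial.eval p f = 0}).ncard ≤ d * m := by
  have hle : Z.τ 2 ≤ zariskiTopology K 2 :=
    le_generateFrom fun V hV =>
      (@isClosed_compl_iff _ (Z.τ 2) V).1 (hrefine 2 _ hV)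
  exact hd ▸ plane_curve_bezout_bound_general Z hrefine C hCcl hCirr hCdim m U hUne
    (hle U hUopen) hdeg f hfin
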